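/- arXiv:2603.12497 — 2 statements merged into one kernel-verified Lean document; each statement's English description precedes it below -/
import Mathlib

section
/- Let 𝒪_{jk}(x,t) := δ_{jk} H_α(x,t) − ∂_j ∂_k Δ^{−1} H_α(x,t) be the 2D nonlocal Oseen kernel, where H_α is the fractional heat kernel with α ∈ (1/2,1). Then for every integer k ≥ 0 and every real β with β + k > −2 there is C(k,β,α) with |∇_x^k (−Δ)^{β/2} 𝒪(x,t)| ≤ C (t^{1/(2α)} + |x|)^{−2−β−k} for all x ∈ ℝ², t > 0. -/
open MeasureTheory
open scoped FourierTransform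

noncomputable section

abbrev E2 := EuclideanSpace ℝ (Fin 2)

/-- The Fourier symbol of the 2D nonlocal Oseen kernel:
`(δ_{ab} − ξ_aξ_b/|ξ|²) e^{−t|ξ|^{2α}}`. -/
def oseenSym (α : ℝ) (a b : Fin 2) (t : ℝ) (ξ : E2) : ℂ :=
  ((((if a = b then (1:ℝ) else 0) - ξ a * ξ b / ‖ξ‖ ^ 2) : ℝ) : ℂ) *
    Complex.exp (-((t * ‖ξ‖ ^ (2 * α) : ℝ) : ℂ))

/-- `(−Δ)^{β/2} 𝒪_{ab}(·,t) = 𝓕⁻¹(|ξ|^β (δ_{ab} − ξ_aξ_b/|ξ|²) e^{−t|ξ|^{2α}})`. -/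
def oseenFrac (α β : ℝ) (a b : Fin 2) (t : ℝ) : E2 → ℂ :=
  𝓕⁻ (fun ξ : E2 => ((‖ξ‖ ^ β : ℝ) : ℂ) * oseenSym α a b t ξ)

open scoped ContDiff

/-! ## Symbol estimates away from the origin -/

lemma uds : UniqueDiffOn ℝ ({0}ᶜ : Set E2) := isOpen_compl_singleton.uniqueDiffOn

lemma hom_bound {F : Type*} [NormedAddCommGroup F] [NormedSpace ℝ F] (Q : E2 → F) (γ : ℝ)
    (hQ : ContDiffOn ℝ ∞ Q {0}ᶜ)
    (hom : ∀ r : ℝ, 0 < r → ∀ ξ : E2, ξ ≠ 0 → Q (r • ξ) = r ^ γ • Q ξ) (n : ℕ) :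
    ∃ C > 0, ∀ ξ : E2, ξ ≠ 0 →
      ‖iteratedFDerivWithin ℝ n Q {0}ᶜ ξ‖ ≤ C * ‖ξ‖ ^ (γ - n) := by
  have hcont : ContinuousOn (iteratedFDerivWithin ℝ n Q {0}ᶜ) (Metric.sphere (0 : E2) 1) := by
    refine (hQ.continuousOn_iteratedFDerivWithin (m := n) ?_ uds).mono ?_
    · exact_mod_cast le_top
    · intro x hx
      simp only [Set.mem_compl_iff, Set.mem_singleton_iff]
      rintro rfl
      simp at hx
  obtain ⟨C, hC⟩ := (isCompact_sphere (0 : E2) 1).exists_bound_of_continuousOn hcont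
  refine ⟨max C 1, by positivity, fun ξ hξ => ?_⟩
  have hr : 0 < ‖ξ‖ := norm_pos_iff.mpr hξ
  set r := ‖ξ‖ with hrdef
  let g : E2 ≃L[ℝ] E2 := ContinuousLinearEquiv.smulLeft (Units.mk0 (r⁻¹) (inv_ne_zero hr.ne'))
  have hg : ∀ x, g x = r⁻¹ • x := fun x => rfl
  have hpre : g ⁻¹' ({0}ᶜ : Set E2) = {0}ᶜ := by
    ext x; simp
  have heq : Set.EqOn Q (r ^ γ • (Q ∘ g)) {0}ᶜ := by
    intro x hx
    simp only [Pi.smul_apply, Function.comp, hg]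
    rw [hom _ (inv_pos.mpr hr) x hx, smul_smul, ← Real.mul_rpow hr.le (inv_pos.mpr hr).le,
      mul_inv_cancel₀ hr.ne', Real.one_rpow, one_smul]
  have hgξ : g ξ ∈ ({0}ᶜ : Set E2) := by simpa using hξ
  have hcd : ContDiffWithinAt ℝ n (Q ∘ g) {0}ᶜ ξ := by
    have h1 : ContDiffOn ℝ ∞ (Q ∘ g) {0}ᶜ := by
      have := hQ.comp_continuousLinearMap (g : E2 →L[ℝ] E2)
      rw [← hpre]; exact this
    exact (h1 ξ hξ).of_le (by exact_mod_cast le_top)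
  have key := g.iteratedFDerivWithin_comp_right Q uds hgξ n
  rw [hpre] at key
  rw [iteratedFDerivWithin_congr heq hξ, iteratedFDerivWithin_const_smul_apply hcd uds hξ, key,
    norm_smul, Real.norm_of_nonneg (by positivity)]
  have hs : g ξ ∈ Metric.sphere (0 : E2) 1 := by
    simp [hg, norm_smul, ← hrdef, abs_of_pos hr, hr.ne']
  have hgn : ‖(g : E2 →L[ℝ] E2)‖ ≤ r⁻¹ := by
    refine ContinuousLinearMap.opNorm_le_bound _ (by positivity) fun x => ?_
    change ‖r⁻¹ • x‖ ≤ _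
    rw [norm_smul, norm_inv, Real.norm_of_nonneg hr.le]
  calc r ^ γ * _ ≤ r ^ γ * (max C 1 * (r⁻¹) ^ n) := by
        gcongr
        refine (ContinuousMultilinearMap.norm_compContinuousLinearMap_le _ _).trans ?_
        simp only [Finset.prod_const, Finset.card_univ, Fintype.card_fin]
        gcongr
        exact (hC _ hs).trans (le_max_left _ _)
    _ = max C 1 * r ^ (γ - n) := by
        rw [Real.rpow_sub hr, Real.rpow_natCast, inv_pow]; field_simp

lemma smul_bound {F : Type*} [NormedAddCommGroup F] [NormedSpace ℝ F] {ι : Type*}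
    (f : ι → E2 → ℝ) (g : ι → E2 → F) (a b : ℝ)
    (hf : ∀ i, ContDiffOn ℝ ∞ (f i) {0}ᶜ) (hg : ∀ i, ContDiffOn ℝ ∞ (g i) {0}ᶜ)
    (w : ι → E2 → ℝ) (hw : ∀ i ξ, 0 ≤ w i ξ)
    (bf : ∀ n : ℕ, ∃ C > 0, ∀ i, ∀ ξ : E2, ξ ≠ 0 →
      w i ξ * ‖iteratedFDerivWithin ℝ n (f i) {0}ᶜ ξ‖ ≤ C * ‖ξ‖ ^ (a - n))
    (bg : ∀ n : ℕ, ∃ C > 0, ∀ i, ∀ ξ : E2, ξ ≠ 0 →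
      ‖iteratedFDerivWithin ℝ n (g i) {0}ᶜ ξ‖ ≤ C * ‖ξ‖ ^ (b - n)) (n : ℕ) :
    ∃ C > 0, ∀ i, ∀ ξ : E2, ξ ≠ 0 →
      w i ξ * ‖iteratedFDerivWithin ℝ n (fun y => f i y • g i y) {0}ᶜ ξ‖ ≤ C * ‖ξ‖ ^ (a + b - n) := by
  choose A hA hfA using bf
  choose B hB hgB using bg
  refine ⟨∑ j ∈ Finset.range (n + 1), (n.choose j : ℝ) * A j * B (n - j), ?_, fun i ξ hξ => ?_⟩
  · refine Finset.sum_pos (fun j hj => ?_) (by simp)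
    have : 0 < n.choose j := Nat.choose_pos (by simpa [Nat.lt_succ_iff] using hj)
    have := hA j; have := hB (n - j)
    positivity
  have hr : 0 < ‖ξ‖ := norm_pos_iff.mpr hξ
  have h := norm_iteratedFDerivWithin_smul_le (𝕜' := ℝ) (hf i) (hg i) uds hξ (n := n) (by exact_mod_cast le_top)
  refine (mul_le_mul_of_nonneg_left h (hw i ξ)).trans ?_
  rw [Finset.mul_sum, Finset.sum_mul]
  refine Finset.sum_le_sum fun j hj => ?_
  have hj' : j ≤ n := by simpa [Nat.lt_succ_iff] using hj
  have e : ‖ξ‖ ^ (a + b - n) = ‖ξ‖ ^ (a - j) * ‖ξ‖ ^ (b - (n - j : ℕ)) := by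
    rw [← Real.rpow_add hr]; congr 1; push_cast [hj']; ring
  rw [e]
  calc _ = (n.choose j : ℝ) * (w i ξ * ‖iteratedFDerivWithin ℝ j (f i) {0}ᶜ ξ‖)
          * ‖iteratedFDerivWithin ℝ (n - j) (g i) {0}ᶜ ξ‖ := by ring
    _ ≤ (n.choose j : ℝ) * (A j * ‖ξ‖ ^ (a - j)) * (B (n - j) * ‖ξ‖ ^ (b - (n - j : ℕ))) := by
        have h0 := hA j
        have h1 := hfA j i ξ hξ
        have h2 := hgB (n - j) i ξ hξ
        exact mul_le_mul (mul_le_mul_of_nonneg_left h1 (by positivity)) h2 (by positivity)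
          (by positivity)
    _ = _ := by ring

lemma contDiffOn_norm_rpow (p : ℝ) : ContDiffOn ℝ ∞ (fun ξ : E2 => ‖ξ‖ ^ p) {0}ᶜ := by
  intro x hx
  exact ((contDiffAt_norm ℝ hx).rpow_const_of_ne (norm_ne_zero_iff.mpr hx)).contDiffWithinAt

lemma contDiffOn_exp (α t : ℝ) :
    ContDiffOn ℝ ∞ (fun ξ : E2 => Real.exp (-(t * ‖ξ‖ ^ (2 * α)))) {0}ᶜ :=
  ((contDiffOn_const.mul (contDiffOn_norm_rpow _)).neg).exp

lemma poly_exp_bound (n : ℕ) (s : ℝ) (hs : 0 ≤ s) :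
    (1 + s) ^ n * Real.exp (-s) ≤ n.factorial * Real.exp 1 := by
  have h := Real.pow_div_factorial_le_exp (1 + s) (by positivity) n
  rw [div_le_iff₀ (by positivity), Real.exp_add] at h
  calc _ ≤ (Real.exp 1 * Real.exp s * n.factorial) * Real.exp (-s) := by gcongr
    _ = n.factorial * Real.exp 1 * (Real.exp s * Real.exp (-s)) := by ring
    _ = _ := by rw [← Real.exp_add]; simp

lemma exp_bound (α : ℝ) (M n : ℕ) :
    ∃ C > 0, ∀ t : Set.Ioi (0:ℝ), ∀ ξ : E2, ξ ≠ 0 →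
      ((t : ℝ) * ‖ξ‖ ^ (2 * α)) ^ M *
        ‖iteratedFDerivWithin ℝ n (fun ξ : E2 => Real.exp (-((t:ℝ) * ‖ξ‖ ^ (2 * α)))) {0}ᶜ ξ‖
        ≤ C * ‖ξ‖ ^ ((0:ℝ) - n) := by
  have hb := hom_bound (fun ξ : E2 => -‖ξ‖ ^ (2 * α)) (2 * α) (contDiffOn_norm_rpow _).neg
    (fun r hr ξ _ => by
      simp only [norm_smul, Real.norm_of_nonneg hr.le, smul_eq_mul]
      rw [Real.mul_rpow hr.le (norm_nonneg _)]; ring)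
  choose A hA hAb using hb
  set D : ℝ := 1 + ∑ i ∈ Finset.range (n + 1), A i with hD
  have hD1 : 1 ≤ D := by
    have : 0 ≤ ∑ i ∈ Finset.range (n + 1), A i := Finset.sum_nonneg fun i _ => (hA i).le
    linarith
  refine ⟨n.factorial * ((M + n).factorial * Real.exp 1) * D ^ n, by positivity, ?_⟩
  rintro ⟨t, ht⟩ ξ hξ
  simp only [Set.mem_Ioi] at ht
  have hr : 0 < ‖ξ‖ := norm_pos_iff.mpr hξ
  dsimp only
  set s := t * ‖ξ‖ ^ (2 * α) with hs
  have hs0 : 0 ≤ s := by positivity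
  have hF : ContDiffOn ℝ ∞ (fun ξ : E2 => t • (-‖ξ‖ ^ (2 * α))) {0}ᶜ :=
    (contDiffOn_norm_rpow _).neg.const_smul t
  have hcomp := norm_iteratedFDerivWithin_comp_le (g := Real.exp)
    (f := fun ξ : E2 => t • (-‖ξ‖ ^ (2 * α))) (n := n) (s := {0}ᶜ) (t := Set.univ) (x := ξ) (N := ∞)
    Real.contDiff_exp.contDiffOn hF (by exact_mod_cast le_top) uniqueDiffOn_univ uds
    (Set.mapsTo_univ _ _) hξ (C := Real.exp (-s)) (D := (1 + s) * D / ‖ξ‖) ?_ ?_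
  · have e : (Real.exp ∘ fun ξ : E2 => t • (-‖ξ‖ ^ (2 * α))) =
        fun ξ : E2 => Real.exp (-(t * ‖ξ‖ ^ (2 * α))) := by
      ext y; simp
    rw [e] at hcomp
    calc _ ≤ s ^ M * (n.factorial * Real.exp (-s) * ((1 + s) * D / ‖ξ‖) ^ n) := by gcongr
      _ ≤ (1 + s) ^ M * (n.factorial * Real.exp (-s) * ((1 + s) * D / ‖ξ‖) ^ n) := by
          gcongr; linarith
      _ = n.factorial * ((1 + s) ^ (M + n) * Real.exp (-s)) * D ^ n * (‖ξ‖ ^ n)⁻¹ := by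
          rw [div_pow, mul_pow, pow_add]; ring
      _ ≤ n.factorial * ((M + n).factorial * Real.exp 1) * D ^ n * (‖ξ‖ ^ n)⁻¹ := by
          have h1 := poly_exp_bound (M + n) s hs0
          exact mul_le_mul_of_nonneg_right (mul_le_mul_of_nonneg_right
            (mul_le_mul_of_nonneg_left h1 (by positivity)) (by positivity)) (by positivity)
      _ = _ := by
          rw [zero_sub, Real.rpow_neg hr.le, Real.rpow_natCast]
  · intro i hi
    rw [iteratedFDerivWithin_univ, norm_iteratedFDeriv_eq_norm_iteratedDeriv, iteratedDeriv_eq_iterate,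
      Real.iter_deriv_exp, Real.norm_of_nonneg (Real.exp_pos _).le]
    simp [hs]
  · intro i hi1 hin
    have hcd : ContDiffWithinAt ℝ i (fun ξ : E2 => -‖ξ‖ ^ (2 * α)) {0}ᶜ ξ :=
      ((contDiffOn_norm_rpow _).neg ξ hξ).of_le (by exact_mod_cast le_top)
    have : (fun ξ : E2 => t • (-‖ξ‖ ^ (2 * α))) = t • (fun ξ : E2 => -‖ξ‖ ^ (2 * α)) := rfl
    rw [this, iteratedFDerivWithin_const_smul_apply hcd uds hξ, norm_smul, Real.norm_of_nonneg ht.le]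
    have hAi : A i ≤ D := by
      have := Finset.single_le_sum (f := A) (fun j _ => (hA j).le) (Finset.mem_range.mpr (Nat.lt_succ_of_le hin))
      linarith
    calc t * _ ≤ t * (A i * ‖ξ‖ ^ (2 * α - i)) := by gcongr; exact hAb i ξ hξ
      _ = s * A i / ‖ξ‖ ^ i := by rw [Real.rpow_sub hr, Real.rpow_natCast]; ring
      _ ≤ ((1 + s) * D) / ‖ξ‖ ^ i := by
          have := hA i
          gcongr; linarith
      _ ≤ ((1 + s) * D) ^ i / ‖ξ‖ ^ i := by
          gcongr
          apply le_self_pow₀ _ (by omega)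
          nlinarith
      _ = _ := by rw [div_pow]

/-! ## Cutoff -/

/-- a smooth bump equal to one on the unit ball and supported in the ball of radius two -/
def bmp : ContDiffBump (0 : E2) := ⟨1, 2, one_pos, one_lt_two⟩

lemma psi_contDiff : ContDiff ℝ ∞ (fun ξ : E2 => 1 - bmp ξ) := contDiff_const.sub bmp.contDiff

lemma cut_bound (n : ℕ) : ∃ C > 0, ∀ ξ : E2, ξ ≠ 0 →
    ‖iteratedFDerivWithin ℝ n (fun ξ : E2 => 1 - bmp ξ) {0}ᶜ ξ‖ ≤ C * ‖ξ‖ ^ ((0:ℝ) - n) := by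
  have hcs : HasCompactSupport (fun ξ : E2 => (‖ξ‖ ^ n) * ‖iteratedFDeriv ℝ n bmp ξ‖) :=
    (bmp.hasCompactSupport.iteratedFDeriv n).norm.mul_left
  have hc : Continuous (fun ξ : E2 => (‖ξ‖ ^ n) * ‖iteratedFDeriv ℝ n bmp ξ‖) :=
    (continuous_norm.pow n).mul
      (bmp.contDiff.continuous_iteratedFDeriv (n := ∞) (by exact_mod_cast le_top)).norm
  obtain ⟨C, hC⟩ := hcs.exists_bound_of_continuous hc
  refine ⟨1 + max C 0, by positivity, fun ξ hξ => ?_⟩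
  have hr : 0 < ‖ξ‖ := norm_pos_iff.mpr hξ
  have hC' := hC ξ
  rw [norm_mul, norm_pow, norm_norm, norm_norm] at hC'
  rw [iteratedFDerivWithin_of_isOpen n isOpen_compl_singleton hξ, zero_sub, Real.rpow_neg hr.le,
    Real.rpow_natCast, ← div_eq_mul_inv, le_div_iff₀ (by positivity), mul_comm]
  rcases Nat.eq_zero_or_pos n with rfl | hn
  · simp only [pow_zero, one_mul, norm_iteratedFDeriv_zero]
    have h1 := bmp.nonneg (x := ξ)
    have h2 := bmp.le_one (x := ξ)
    rw [Real.norm_of_nonneg (by linarith)]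
    have := le_max_right C 0
    linarith
  · have e : iteratedFDeriv ℝ n (fun ξ : E2 => 1 - bmp ξ) ξ = - iteratedFDeriv ℝ n bmp ξ := by
      have h := iteratedFDeriv_sub_apply (𝕜 := ℝ) (i := n) (x := ξ) (f := fun _ : E2 => (1:ℝ)) (g := bmp)
        contDiffAt_const bmp.contDiff.contDiffAt
      have e2 : ((fun _ : E2 => (1:ℝ)) - (bmp : E2 → ℝ)) = fun ξ => 1 - bmp ξ := rfl
      rw [e2, iteratedFDeriv_const_of_ne (by omega)] at h
      simpa using h
    rw [e, norm_neg]
    have := le_max_left C 0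
    linarith

lemma integrable_pow_exp (α : ℝ) (hα : 0 < α) (p : ℝ) (hp : -2 < p) (t : ℝ) (ht : 0 < t) :
    Integrable (fun ξ : E2 => ‖ξ‖ ^ p * Real.exp (-(t * ‖ξ‖ ^ (2 * α)))) := by
  rw [integrable_fun_norm_addHaar volume (f := fun y : ℝ => y ^ p * Real.exp (-(t * y ^ (2 * α))))]
  refine (integrableOn_rpow_mul_exp_neg_mul_rpow (p := 2 * α) (s := p + 1) (b := t) (by linarith)
    (by linarith) ht).congr_fun (fun y hy => ?_) measurableSet_Ioi
  have hy : 0 < y := hy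
  simp only [finrank_euclideanSpace, Fintype.card_fin, smul_eq_mul, Real.rpow_add_one hy.ne']
  norm_num
  ring

lemma aesm_of_contOn {F : Type*} [NormedAddCommGroup F] (f : E2 → F)
    (hf : ContinuousOn f {0}ᶜ) : AEStronglyMeasurable f volume := by
  have h := hf.aestronglyMeasurable (μ := (volume : Measure E2)) (measurableSet_singleton 0).compl
  rwa [Measure.restrict_eq_self_of_ae_mem (by simp [ae_iff])] at h

lemma ae_ne_zero : ∀ᵐ ξ : E2, ξ ≠ 0 := by
  simp [ae_iff]

section core
variable {F : Type*} [NormedAddCommGroup F] [NormedSpace ℂ F]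

lemma high_bound (α : ℝ) (hα : 0 < α) (γ : ℝ) (Q : E2 → F)
    (hQ : ContDiffOn ℝ ∞ Q {0}ᶜ)
    (hom : ∀ r : ℝ, 0 < r → ∀ ξ : E2, ξ ≠ 0 → Q (r • ξ) = r ^ γ • Q ξ) (n M : ℕ)
    (hM : γ - n - 2 * α * M ≤ -3) :
    ∃ C > 0, ∀ t : ℝ, 0 < t → ∀ ξ : E2,
      ‖iteratedFDeriv ℝ n (fun ξ : E2 => Real.exp (-(t * ‖ξ‖ ^ (2 * α))) • (1 - bmp ξ) • Q ξ) ξ‖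
        ≤ C * (t ^ M)⁻¹ * (1 + ‖ξ‖) ^ (-3 : ℝ) := by
  have b1 := smul_bound (ι := Unit) (fun _ ξ => 1 - bmp ξ) (fun _ => Q) 0 γ
    (fun _ => psi_contDiff.contDiffOn) (fun _ => hQ) (fun _ _ => 1) (fun _ _ => zero_le_one)
    (by simpa using cut_bound) (by simpa using hom_bound Q γ hQ hom)
  simp only [one_mul] at b1
  obtain ⟨C, hC, hb⟩ := smul_bound (ι := Set.Ioi (0:ℝ))
    (fun t ξ => Real.exp (-((t:ℝ) * ‖ξ‖ ^ (2 * α)))) (fun _ ξ => (1 - bmp ξ) • Q ξ)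
    0 (0 + γ) (fun t => contDiffOn_exp α t) (fun _ => psi_contDiff.contDiffOn.smul hQ)
    (fun t ξ => ((t : ℝ) * ‖ξ‖ ^ (2 * α)) ^ M)
    (fun t ξ => by have := t.2; simp only [Set.mem_Ioi] at this; positivity) (exp_bound α M)
    (fun n => by
      obtain ⟨C, hC, h⟩ := b1 n
      exact ⟨C, hC, fun _ => h ()⟩) n
  refine ⟨C * 8, by positivity, fun t ht ξ => ?_⟩
  rcases lt_or_ge ‖ξ‖ 1 with h | h
  · have : (fun ξ : E2 => Real.exp (-(t * ‖ξ‖ ^ (2 * α))) • (1 - bmp ξ) • Q ξ) =ᶠ[nhds ξ]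
        fun _ => 0 := by
      filter_upwards [(isOpen_lt continuous_norm continuous_const).mem_nhds h] with y hy
      have : bmp y = 1 := bmp.one_of_mem_closedBall (by
        simp only [bmp, Metric.mem_closedBall, dist_zero_right]; exact le_of_lt hy)
      simp [this]
    rw [(this.iteratedFDeriv ℝ n).eq_of_nhds]
    have : iteratedFDeriv ℝ n (fun _ : E2 => (0 : F)) ξ = 0 := by
      rw [iteratedFDeriv_fun_zero]; rfl
    rw [this, norm_zero]
    positivity
  · have hr : 0 < ‖ξ‖ := by linarith
    have hξ : ξ ≠ 0 := norm_pos_iff.mp hr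
    have h1 := hb ⟨t, ht⟩ ξ hξ
    dsimp only at h1
    rw [iteratedFDerivWithin_of_isOpen n isOpen_compl_singleton hξ] at h1
    set X := ‖iteratedFDeriv ℝ n (fun ξ : E2 => Real.exp (-(t * ‖ξ‖ ^ (2 * α))) • (1 - bmp ξ) • Q ξ) ξ‖
      with hX
    have e : (t * ‖ξ‖ ^ (2 * α)) ^ M = t ^ M * ‖ξ‖ ^ (2 * α * M) := by
      rw [mul_pow, Real.rpow_mul_natCast hr.le]
    rw [e] at h1
    have h2 : X ≤ C * (t ^ M)⁻¹ * ‖ξ‖ ^ (γ - n - 2 * α * M) := by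
      have : ‖ξ‖ ^ (0 + (0 + γ) - n) = ‖ξ‖ ^ (γ - n - 2 * α * M) * ‖ξ‖ ^ (2 * α * M) := by
        rw [← Real.rpow_add hr]; congr 1; ring
      rw [this] at h1
      have hp : 0 < t ^ M * ‖ξ‖ ^ (2 * α * M) := by positivity
      rw [← mul_le_mul_iff_right₀ hp]
      refine h1.trans (le_of_eq ?_)
      field_simp
    have h3 : ‖ξ‖ ^ (γ - n - 2 * α * M) ≤ 8 * (1 + ‖ξ‖) ^ (-3 : ℝ) := by
      refine (Real.rpow_le_rpow_of_exponent_le h hM).trans ?_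
      have : ((1 + ‖ξ‖) / 2) ^ (-3 : ℝ) = 8 * (1 + ‖ξ‖) ^ (-3 : ℝ) := by
        rw [Real.div_rpow (by positivity) (by norm_num), div_eq_mul_inv, ← Real.rpow_neg (by norm_num)]
        norm_num; ring
      rw [← this]
      exact Real.rpow_le_rpow_of_nonpos (by positivity) (by linarith) (by norm_num)
    calc X ≤ _ := h2
      _ ≤ C * (t ^ M)⁻¹ * (8 * (1 + ‖ξ‖) ^ (-3 : ℝ)) := by gcongr
      _ = _ := by ring

lemma high_contDiff (α : ℝ) (t : ℝ) (Q : E2 → F) (hQ : ContDiffOn ℝ ∞ Q {0}ᶜ) :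
    ContDiff ℝ ∞ (fun ξ : E2 => Real.exp (-(t * ‖ξ‖ ^ (2 * α))) • (1 - bmp ξ) • Q ξ) := by
  rw [contDiff_iff_contDiffAt]
  intro ξ
  by_cases h : ξ = 0
  · subst h
    have : (fun ξ : E2 => Real.exp (-(t * ‖ξ‖ ^ (2 * α))) • (1 - bmp ξ) • Q ξ) =ᶠ[nhds 0]
        fun _ => 0 := by
      filter_upwards [Metric.ball_mem_nhds (0 : E2) one_pos] with y hy
      have : bmp y = 1 := bmp.one_of_mem_closedBall (Metric.ball_subset_closedBall hy)
      simp [this]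
    exact contDiffAt_const.congr_of_eventuallyEq this
  · exact ((contDiffOn_exp α t).smul (psi_contDiff.contDiffOn.smul hQ)).contDiffAt
      (isOpen_compl_singleton.mem_nhds h)

lemma high_fourier (α : ℝ) (hα : 0 < α) (γ : ℝ) (Q : E2 → F)
    (hQ : ContDiffOn ℝ ∞ Q {0}ᶜ)
    (hom : ∀ r : ℝ, 0 < r → ∀ ξ : E2, ξ ≠ 0 → Q (r • ξ) = r ^ γ • Q ξ) :
    ∃ C > 0, ∀ t : ℝ, 0 < t → ∀ x : E2, ‖x‖ = 1 →
      ‖𝓕 (fun ξ : E2 => Real.exp (-(t * ‖ξ‖ ^ (2 * α))) • (1 - bmp ξ) • Q ξ) x‖ ≤ C := by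
  obtain ⟨N, hN⟩ := exists_nat_ge (γ + 3)
  obtain ⟨M, hM⟩ := exists_nat_ge ((γ + 3) / (2 * α))
  rw [div_le_iff₀ (by positivity)] at hM
  obtain ⟨C, hC, hb⟩ := high_bound α hα γ Q hQ hom N 0 (by push_cast; linarith)
  have hint : Integrable (fun ξ : E2 => (1 + ‖ξ‖) ^ (-3 : ℝ)) :=
    integrable_one_add_norm (by simp; norm_num)
  have hI0 : 0 ≤ ∫ ξ : E2, (1 + ‖ξ‖) ^ (-3 : ℝ) := integral_nonneg fun _ => by positivity
  refine ⟨C * (∫ ξ : E2, (1 + ‖ξ‖) ^ (-3 : ℝ)) + 1, by positivity, fun t ht x hx => ?_⟩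
  set h := (fun ξ : E2 => Real.exp (-(t * ‖ξ‖ ^ (2 * α))) • (1 - bmp ξ) • Q ξ) with hh
  have hcd : ContDiff ℝ ∞ h := high_contDiff α t Q hQ
  have hI : ∀ n : ℕ, Integrable (iteratedFDeriv ℝ n h) := by
    intro n
    obtain ⟨C', hC', hb'⟩ := high_bound α hα γ Q hQ hom n M (by
      have : (0:ℝ) ≤ n := n.cast_nonneg
      linarith)
    refine (hint.const_mul (C' * (t ^ M)⁻¹)).mono'
      (hcd.continuous_iteratedFDeriv (by exact_mod_cast le_top)).aestronglyMeasurable ?_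
    exact Filter.Eventually.of_forall fun ξ => hb' t ht ξ
  have key := congrFun (Real.fourier_iteratedFDeriv (N := ⊤) hcd (fun n _ => hI n) (n := N) le_top) x
  have h1 : ‖𝓕 (iteratedFDeriv ℝ N h) x‖ ≤ C * ∫ ξ : E2, (1 + ‖ξ‖) ^ (-3 : ℝ) := by
    refine (VectorFourier.norm_fourierIntegral_le_integral_norm _ _ _ _ _).trans ?_
    rw [← integral_const_mul]
    refine integral_mono (hI N).norm (hint.const_mul C) fun ξ => ?_
    simpa using hb t ht ξ
  have h2 := ContinuousMultilinearMap.le_opNorm (𝓕 (iteratedFDeriv ℝ N h) x) (fun _ => x)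
  have hxx : (innerSL ℝ x) x = (1 : ℝ) := by
    change inner ℝ x x = (1 : ℝ)
    rw [real_inner_self_eq_norm_sq, hx, one_pow]
  rw [key, VectorFourier.fourierPowSMulRight_apply, ← key] at h2
  simp only [neg_apply, hxx, hx,
    Finset.prod_const, norm_smul, norm_pow, one_pow, norm_neg, norm_one, one_mul, mul_one,
    Finset.card_univ, Fintype.card_fin, norm_mul, Complex.norm_I, Complex.norm_real,
    Complex.norm_ofNat, Real.norm_eq_abs, abs_of_pos Real.pi_pos] at h2
  have h3 : (1 : ℝ) ≤ (2 * Real.pi) ^ N := one_le_pow₀ (by linarith [Real.pi_gt_three])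
  have h4 := norm_nonneg (𝓕 h x)
  nlinarith

lemma G_integrable (α : ℝ) (hα : 0 < α) (γ : ℝ) (hγ : -2 < γ) (Q : E2 → F)
    (hQ : ContDiffOn ℝ ∞ Q {0}ᶜ) (C : ℝ)
    (hC : ∀ ξ : E2, ξ ≠ 0 → ‖Q ξ‖ ≤ C * ‖ξ‖ ^ γ) (t : ℝ) (ht : 0 < t) :
    Integrable (fun ξ : E2 => Real.exp (-(t * ‖ξ‖ ^ (2 * α))) • Q ξ) := by
  refine ((integrable_pow_exp α hα γ hγ t ht).const_mul C).mono'
    (aesm_of_contOn _ ((contDiffOn_exp α t).smul hQ).continuousOn) ?_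
  filter_upwards [ae_ne_zero] with ξ hξ
  rw [norm_smul, Real.norm_of_nonneg (Real.exp_pos _).le]
  calc _ ≤ Real.exp (-(t * ‖ξ‖ ^ (2 * α))) * (C * ‖ξ‖ ^ γ) := by gcongr; exact hC ξ hξ
    _ = _ := by ring

lemma core_unit (α : ℝ) (hα : 0 < α) (γ : ℝ) (hγ : -2 < γ) (Q : E2 → F)
    (hQ : ContDiffOn ℝ ∞ Q {0}ᶜ)
    (hom : ∀ r : ℝ, 0 < r → ∀ ξ : E2, ξ ≠ 0 → Q (r • ξ) = r ^ γ • Q ξ) :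
    ∃ C > 0, ∀ t : ℝ, 0 < t → ∀ x : E2, ‖x‖ = 1 →
      ‖𝓕 (fun ξ : E2 => Real.exp (-(t * ‖ξ‖ ^ (2 * α))) • Q ξ) x‖ ≤ C := by
  obtain ⟨C1, hC1, h1⟩ := high_fourier α hα γ Q hQ hom
  obtain ⟨C0, hC0, h0⟩ := hom_bound Q γ hQ hom 0
  have h0 : ∀ ξ : E2, ξ ≠ 0 → ‖Q ξ‖ ≤ C0 * ‖ξ‖ ^ γ := by
    intro ξ hξ
    simpa using h0 ξ hξ
  set K := C0 * Real.exp (2 ^ (2 * α)) with hK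
  have hmaj := (integrable_pow_exp α hα γ hγ 1 one_pos).const_mul K
  set I := ∫ ξ : E2, K * (‖ξ‖ ^ γ * Real.exp (-(1 * ‖ξ‖ ^ (2 * α)))) with hI
  have hI0 : 0 ≤ I := integral_nonneg fun _ => by positivity
  refine ⟨C1 + I, by positivity, fun t ht x hx => ?_⟩
  set g := fun ξ : E2 => Real.exp (-(t * ‖ξ‖ ^ (2 * α))) • Q ξ with hg
  set hh := fun ξ : E2 => Real.exp (-(t * ‖ξ‖ ^ (2 * α))) • (1 - bmp ξ) • Q ξ with hhh
  set l := fun ξ : E2 => bmp ξ • g ξ with hl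
  have hgi : Integrable g := G_integrable α hα γ hγ Q hQ C0 h0 t ht
  have hlb : ∀ᵐ ξ : E2, ‖l ξ‖ ≤ K * (‖ξ‖ ^ γ * Real.exp (-(1 * ‖ξ‖ ^ (2 * α)))) := by
    filter_upwards [ae_ne_zero] with ξ hξ
    rw [hl, hg]
    simp only [norm_smul]
    rw [Real.norm_of_nonneg bmp.nonneg, Real.norm_of_nonneg (Real.exp_pos _).le]
    rcases lt_or_ge ‖ξ‖ 2 with h | h
    · have e1 : Real.exp (-(t * ‖ξ‖ ^ (2 * α))) ≤ 1 := by
        rw [Real.exp_le_one_iff]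
        have : 0 ≤ t * ‖ξ‖ ^ (2 * α) := by positivity
        linarith
      have e2 : 1 ≤ Real.exp (2 ^ (2 * α)) * Real.exp (-(1 * ‖ξ‖ ^ (2 * α))) := by
        rw [← Real.exp_add, Real.one_le_exp_iff]
        have := Real.rpow_le_rpow (norm_nonneg ξ) h.le (by positivity : 0 ≤ 2 * α)
        linarith
      calc _ ≤ 1 * (1 * (C0 * ‖ξ‖ ^ γ)) := by
            gcongr
            · exact bmp.le_one
            · exact h0 ξ hξ
        _ = (C0 * ‖ξ‖ ^ γ) * 1 := by ring
        _ ≤ (C0 * ‖ξ‖ ^ γ) * (Real.exp (2 ^ (2 * α)) * Real.exp (-(1 * ‖ξ‖ ^ (2 * α)))) := by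
            exact mul_le_mul_of_nonneg_left e2 (by positivity)
        _ = _ := by rw [hK]; ring
    · have : bmp ξ = 0 := bmp.zero_of_le_dist (by simpa [bmp] using h)
      rw [this, zero_mul]
      positivity
  have hli : Integrable l := hmaj.mono'
    (bmp.continuous.aestronglyMeasurable.smul hgi.aestronglyMeasurable) hlb
  have hsum : g = l + hh := by
    ext ξ
    simp only [hl, hg, hhh, Pi.add_apply]
    rw [smul_comm (bmp ξ), ← smul_add, ← add_smul]
    simp
  have hhi : Integrable hh := by
    have : hh = g - l := by rw [hsum]; simp
    rw [this]; exact hgi.sub hli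
  have hF : 𝓕 g x = 𝓕 l x + 𝓕 hh x := by
    rw [hsum, Real.fourier_eq, Real.fourier_eq, Real.fourier_eq, ← integral_add]
    · simp
    · exact (Real.fourierIntegral_convergent_iff x).2 hli
    · exact (Real.fourierIntegral_convergent_iff x).2 hhi
  rw [hF]
  have hlF : ‖𝓕 l x‖ ≤ I := by
    refine (VectorFourier.norm_fourierIntegral_le_integral_norm _ _ _ _ _).trans ?_
    exact integral_mono_ae hli.norm hmaj hlb
  calc _ ≤ ‖𝓕 l x‖ + ‖𝓕 hh x‖ := norm_add_le _ _
    _ ≤ I + C1 := add_le_add hlF (h1 t ht x hx)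
    _ = _ := add_comm _ _

lemma fourier_scale (α : ℝ) (γ : ℝ) (Q : E2 → F)
    (hom : ∀ r : ℝ, 0 < r → ∀ ξ : E2, ξ ≠ 0 → Q (r • ξ) = r ^ γ • Q ξ) (t r : ℝ) (hr : 0 < r)
    (x : E2) :
    ‖𝓕 (fun ξ : E2 => Real.exp (-(t * ‖ξ‖ ^ (2 * α))) • Q ξ) x‖ = r ^ (-(2 + γ)) *
      ‖𝓕 (fun ξ : E2 => Real.exp (-(t * r⁻¹ ^ (2 * α) * ‖ξ‖ ^ (2 * α))) • Q ξ) (r⁻¹ • x)‖ := by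
  have h := Measure.integral_comp_smul (volume : Measure E2)
    (fun v => Real.fourierChar (-inner ℝ v x) • (Real.exp (-(t * ‖v‖ ^ (2 * α))) • Q v)) r⁻¹
  rw [← Real.fourier_eq] at h
  have e : ∫ v : E2, Real.fourierChar (-inner ℝ (r⁻¹ • v) x) •
        (Real.exp (-(t * ‖r⁻¹ • v‖ ^ (2 * α))) • Q (r⁻¹ • v)) =
      r⁻¹ ^ γ • 𝓕 (fun ξ : E2 => Real.exp (-(t * r⁻¹ ^ (2 * α) * ‖ξ‖ ^ (2 * α))) • Q ξ) (r⁻¹ • x) := by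
    rw [Real.fourier_eq, ← integral_smul]
    refine integral_congr_ae ?_
    filter_upwards [ae_ne_zero] with v hv
    rw [hom _ (inv_pos.mpr hr) v hv, norm_smul, Real.norm_of_nonneg (inv_pos.mpr hr).le,
      Real.mul_rpow (inv_pos.mpr hr).le (norm_nonneg _), inner_smul_left, inner_smul_right,
      smul_comm (r⁻¹ ^ γ), smul_comm (r⁻¹ ^ γ)]
    simp only [conj_trivial, mul_assoc]
  rw [e] at h
  have h2 := congrArg norm h
  rw [norm_smul, norm_smul, Real.norm_of_nonneg (by positivity), Real.norm_of_nonneg (by positivity),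
    finrank_euclideanSpace, Fintype.card_fin, abs_of_pos (by positivity)] at h2
  have e3 : r ^ (-(2 + γ)) = (r ^ 2)⁻¹ * r⁻¹ ^ γ := by
    rw [Real.inv_rpow hr.le, Real.rpow_neg hr.le, Real.rpow_add hr, mul_inv, Real.rpow_ofNat]
  rw [e3, mul_assoc, h2]
  field_simp

lemma core_bound (α : ℝ) (hα : 0 < α) (γ : ℝ) (hγ : -2 < γ) (Q : E2 → F)
    (hQ : ContDiffOn ℝ ∞ Q {0}ᶜ)
    (hom : ∀ r : ℝ, 0 < r → ∀ ξ : E2, ξ ≠ 0 → Q (r • ξ) = r ^ γ • Q ξ) :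
    ∃ C > 0, ∀ t : ℝ, 0 < t → ∀ x : E2,
      ‖𝓕 (fun ξ : E2 => Real.exp (-(t * ‖ξ‖ ^ (2 * α))) • Q ξ) x‖ ≤
        C * (t ^ (1 / (2 * α)) + ‖x‖) ^ (-(2 + γ)) := by
  obtain ⟨C1, hC1, h1⟩ := core_unit α hα γ hγ Q hQ hom
  set I := ∫ ξ : E2, ‖Real.exp (-(1 * ‖ξ‖ ^ (2 * α))) • Q ξ‖ with hI
  have hI0 : 0 ≤ I := integral_nonneg fun _ => norm_nonneg _
  have two : ∀ r R : ℝ, 0 < r → 0 < R → R ≤ 2 * r →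
      r ^ (-(2 + γ)) ≤ 2 ^ (2 + γ) * R ^ (-(2 + γ)) := by
    intro r R hr hR h
    have : 2 ^ (2 + γ) * R ^ (-(2 + γ)) = (R / 2) ^ (-(2 + γ)) := by
      rw [Real.div_rpow hR.le (by norm_num), Real.rpow_neg (by norm_num : (0:ℝ) ≤ 2)]
      field_simp
    rw [this]
    exact Real.rpow_le_rpow_of_nonpos (by positivity) (by linarith) (by linarith)
  refine ⟨2 ^ (2 + γ) * (C1 + I), by positivity, fun t ht x => ?_⟩
  have hT : 0 < t ^ (1 / (2 * α)) := by positivity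
  set T := t ^ (1 / (2 * α)) with hTd
  have hR : 0 < T + ‖x‖ := by positivity
  have fin : ∀ r : ℝ, 0 < r → T + ‖x‖ ≤ 2 * r →
      ‖𝓕 (fun ξ : E2 => Real.exp (-(t * r⁻¹ ^ (2 * α) * ‖ξ‖ ^ (2 * α))) • Q ξ) (r⁻¹ • x)‖ ≤ C1 + I →
      ‖𝓕 (fun ξ : E2 => Real.exp (-(t * ‖ξ‖ ^ (2 * α))) • Q ξ) x‖ ≤
        2 ^ (2 + γ) * (C1 + I) * (T + ‖x‖) ^ (-(2 + γ)) := by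
    intro r hr h2 h3
    rw [fourier_scale α γ Q hom t r hr x]
    calc _ ≤ (2 ^ (2 + γ) * (T + ‖x‖) ^ (-(2 + γ))) * (C1 + I) :=
          mul_le_mul (two r _ hr hR h2) h3 (norm_nonneg _) (by positivity)
      _ = _ := by ring
  rcases le_total T ‖x‖ with h | h
  · have hx : 0 < ‖x‖ := hT.trans_le h
    refine fin ‖x‖ hx (by linarith) ((h1 _ (by positivity) _ ?_).trans (by linarith))
    rw [norm_smul, norm_inv, norm_norm, inv_mul_cancel₀ hx.ne']
  · refine fin T hT (by linarith) ?_
    have e : t * T⁻¹ ^ (2 * α) = 1 := by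
      rw [hTd, Real.inv_rpow (by positivity), ← Real.rpow_mul ht.le, one_div,
        inv_mul_cancel₀ (by positivity), Real.rpow_one, mul_inv_cancel₀ ht.ne']
    rw [e]
    refine (VectorFourier.norm_fourierIntegral_le_integral_norm _ _ _ _ _).trans ?_
    linarith

end core

/-! ## The Oseen symbol -/

/-- the real homogeneous part of the symbol -/
def hsym (β : ℝ) (a b : Fin 2) (ξ : E2) : ℝ :=
  ‖ξ‖ ^ β * ((if a = b then (1:ℝ) else 0) - ξ a * ξ b / ‖ξ‖ ^ 2)

lemma hsym_contDiffOn (β : ℝ) (a b : Fin 2) : ContDiffOn ℝ ∞ (hsym β a b) {0}ᶜ := by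
  have hc : ∀ i : Fin 2, ContDiff ℝ ∞ (fun ξ : E2 => ξ i) := fun i =>
    (EuclideanSpace.proj (𝕜 := ℝ) i).contDiff
  intro x hx
  have hx : x ≠ 0 := hx
  have hn : ContDiffAt ℝ ∞ (fun ξ : E2 => ‖ξ‖ ^ 2) x := (contDiffAt_norm ℝ hx).pow 2
  have h1 : ContDiffAt ℝ ∞ (fun ξ : E2 => ξ a * ξ b / ‖ξ‖ ^ 2) x :=
    ((hc a).mul (hc b)).contDiffAt.div hn (by simpa using hx)
  exact (contDiffOn_norm_rpow β x hx).mul (contDiffAt_const.sub h1).contDiffWithinAt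

lemma hsym_hom (β : ℝ) (a b : Fin 2) (r : ℝ) (hr : 0 < r) (ξ : E2) :
    hsym β a b (r • ξ) = r ^ β * hsym β a b ξ := by
  simp only [hsym, norm_smul, Real.norm_of_nonneg hr.le, PiLp.smul_apply, smul_eq_mul]
  rw [Real.mul_rpow hr.le (norm_nonneg _)]
  have : r * ξ a * (r * ξ b) / (r * ‖ξ‖) ^ 2 = ξ a * ξ b / ‖ξ‖ ^ 2 := by
    rw [show r * ξ a * (r * ξ b) = r ^ 2 * (ξ a * ξ b) by ring, mul_pow,
      mul_div_mul_left _ _ (by positivity)]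
  rw [this]; ring

lemma sym_eq (α β : ℝ) (a b : Fin 2) (t : ℝ) (ξ : E2) :
    ((‖ξ‖ ^ β : ℝ) : ℂ) * oseenSym α a b t ξ =
      ((Real.exp (-(t * ‖ξ‖ ^ (2 * α))) * hsym β a b ξ : ℝ) : ℂ) := by
  simp only [oseenSym, hsym]
  push_cast
  ring

lemma frac_eq (α β : ℝ) (a b : Fin 2) (t : ℝ) :
    oseenFrac α β a b t =
      𝓕 (fun ξ : E2 => ((Real.exp (-(t * ‖ξ‖ ^ (2 * α))) * hsym β a b ξ : ℝ) : ℂ)) := by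
  rw [oseenFrac, Real.fourierInv_eq_fourier_comp_neg]
  congr 1
  ext ξ
  rw [sym_eq]
  simp [hsym]

/-- the tensor power of the frequency variable -/
def tens (k : ℕ) (ξ : E2) : ContinuousMultilinearMap ℝ (fun _ : Fin k => E2) ℂ :=
  VectorFourier.fourierPowSMulRight (innerSL ℝ) (fun _ => (1 : ℂ)) ξ k

lemma tens_contDiff (k : ℕ) : ContDiff ℝ ∞ (tens k) :=
  ContDiff.fourierPowSMulRight (innerSL ℝ) contDiff_const k

lemma tens_hom (k : ℕ) (r : ℝ) (ξ : E2) : tens k (r • ξ) = r ^ k • tens k ξ := by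
  ext m
  simp only [tens, VectorFourier.fourierPowSMulRight_apply, map_smul, ContinuousMultilinearMap.smul_apply,
    ContinuousLinearMap.smul_apply, smul_eq_mul, Finset.prod_mul_distrib, Finset.prod_const,
    Finset.card_univ, Fintype.card_fin, Complex.real_smul]
  push_cast; ring

lemma pow_eq (k : ℕ) (e q : ℝ) (f : E2 → ℂ) (ξ : E2) (hf : f ξ = ((e * q : ℝ) : ℂ)) :
    VectorFourier.fourierPowSMulRight (innerSL ℝ) f ξ k = e • (q • tens k ξ) := by
  ext m
  simp only [tens, VectorFourier.fourierPowSMulRight_apply, ContinuousMultilinearMap.smul_apply,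
    smul_eq_mul, Complex.real_smul, hf]
  push_cast; ring

lemma hsym_bound (β : ℝ) (a b : Fin 2) :
    ∃ C > 0, ∀ ξ : E2, ξ ≠ 0 → ‖hsym β a b ξ‖ ≤ C * ‖ξ‖ ^ β := by
  obtain ⟨C, hC, h⟩ := hom_bound (hsym β a b) β (hsym_contDiffOn β a b)
    (fun r hr ξ _ => hsym_hom β a b r hr ξ) 0
  refine ⟨C, hC, fun ξ hξ => ?_⟩
  simpa using h ξ hξ

lemma moments (α : ℝ) (hα : 0 < α) (β : ℝ) (a b : Fin 2) (t : ℝ) (ht : 0 < t)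
    (hi : Integrable (fun ξ : E2 => ((Real.exp (-(t * ‖ξ‖ ^ (2 * α))) * hsym β a b ξ : ℝ) : ℂ)))
    (n : ℕ) :
    Integrable (fun ξ : E2 => ‖ξ‖ ^ n *
      ‖((Real.exp (-(t * ‖ξ‖ ^ (2 * α))) * hsym β a b ξ : ℝ) : ℂ)‖) := by
  obtain ⟨C, hC, hb⟩ := hsym_bound β a b
  have h2 := (integrable_pow_exp α hα (|β| + n) (by
    have h1 := abs_nonneg β
    have h2 : (0:ℝ) ≤ n := n.cast_nonneg
    linarith) t ht).const_mul C
  refine (hi.norm.add h2).mono'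
    ((continuous_norm.pow n).aestronglyMeasurable.mul hi.norm.aestronglyMeasurable) ?_
  filter_upwards [ae_ne_zero] with ξ hξ
  have hr : 0 < ‖ξ‖ := norm_pos_iff.mpr hξ
  rw [norm_mul, norm_norm, norm_pow, norm_norm]
  simp only [Pi.add_apply]
  rcases le_total ‖ξ‖ 1 with h | h
  · have : ‖ξ‖ ^ n ≤ 1 := pow_le_one₀ hr.le h
    calc _ ≤ 1 * ‖((Real.exp (-(t * ‖ξ‖ ^ (2 * α))) * hsym β a b ξ : ℝ) : ℂ)‖ := by gcongr
      _ ≤ _ := by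
        rw [one_mul]
        exact le_add_of_nonneg_right (by positivity)
  · refine le_trans ?_ (le_add_of_nonneg_left (norm_nonneg _))
    rw [Complex.norm_real, norm_mul, Real.norm_of_nonneg (Real.exp_pos _).le]
    have h3 : ‖hsym β a b ξ‖ ≤ C * ‖ξ‖ ^ |β| := (hb ξ hξ).trans (by gcongr; exact le_abs_self β)
    calc _ ≤ ‖ξ‖ ^ n * (Real.exp (-(t * ‖ξ‖ ^ (2 * α))) * (C * ‖ξ‖ ^ |β|)) := by gcongr
      _ = _ := by rw [Real.rpow_add hr, Real.rpow_natCast]; ring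

lemma fixed_ab (α : ℝ) (hα : 0 < α) (k : ℕ) (β : ℝ) (hβk : -2 < β + k) (a b : Fin 2) :
    ∃ C > 0, ∀ (t : ℝ), 0 < t → ∀ x : E2,
      ‖iteratedFDeriv ℝ k (oseenFrac α β a b t) x‖ ≤
        C * (t ^ (1 / (2 * α)) + ‖x‖) ^ (-(2 + β + (k : ℝ))) := by
  obtain ⟨C, hC, h⟩ := core_bound α hα (β + k) hβk (fun ξ => hsym β a b ξ • tens k ξ)
    ((hsym_contDiffOn β a b).smul (tens_contDiff k).contDiffOn)
    (fun r hr ξ _ => by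
      rw [hsym_hom β a b r hr, tens_hom, Real.rpow_add hr, Real.rpow_natCast, smul_smul, smul_smul]
      congr 1; ring)
  refine ⟨C, hC, fun t ht x => ?_⟩
  rw [frac_eq]
  by_cases hi : Integrable
      (fun ξ : E2 => ((Real.exp (-(t * ‖ξ‖ ^ (2 * α))) * hsym β a b ξ : ℝ) : ℂ))
  · rw [Real.iteratedFDeriv_fourier (N := ⊤) (fun n _ => moments α hα β a b t ht hi n)
      hi.aestronglyMeasurable le_top]
    have e : (fun ξ => VectorFourier.fourierPowSMulRight (innerSL ℝ)
        (fun ξ : E2 => ((Real.exp (-(t * ‖ξ‖ ^ (2 * α))) * hsym β a b ξ : ℝ) : ℂ)) ξ k) =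
        fun ξ => Real.exp (-(t * ‖ξ‖ ^ (2 * α))) • (hsym β a b ξ • tens k ξ) := by
      ext1 ξ
      exact pow_eq k _ _ _ ξ rfl
    rw [e, add_assoc]
    exact h t ht x
  · have e : 𝓕 (fun ξ : E2 => ((Real.exp (-(t * ‖ξ‖ ^ (2 * α))) * hsym β a b ξ : ℝ) : ℂ)) =
        fun _ => 0 := by
      ext x
      rw [Real.fourier_eq, integral_undef]
      rwa [Real.fourierIntegral_convergent_iff x]
    rw [e, iteratedFDeriv_fun_zero]
    simp only [Pi.zero_apply, norm_zero]
    positivity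

/-- decay of the nonlocal Oseen kernel:
`|∇^k (−Δ)^{β/2} 𝒪(x,t)| ≤ C (t^{1/(2α)} + |x|)^{−2−β−k}` for `β + k > −2`. -/
theorem oseen_kernel_decay (α : ℝ) (hα : α ∈ Set.Ioo (1/2 : ℝ) 1)
    (k : ℕ) (β : ℝ) (hβk : -2 < β + k) :
    ∃ C > 0, ∀ (a b : Fin 2) (t : ℝ), 0 < t → ∀ x : E2,
      ‖iteratedFDeriv ℝ k (oseenFrac α β a b t) x‖ ≤
        C * (t ^ (1 / (2 * α)) + ‖x‖) ^ (-(2 + β + (k : ℝ))) := by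
  have hα0 : 0 < α := by have := hα.1; linarith
  choose C hC h using fixed_ab α hα0 k β hβk
  refine ⟨∑ a, ∑ b, C a b,
    Finset.sum_pos (fun a _ => Finset.sum_pos (fun b _ => hC a b) Finset.univ_nonempty)
      Finset.univ_nonempty, fun a b t ht x => (h a b t ht x).trans ?_⟩
  gcongr
  exact (Finset.single_le_sum (f := C a) (fun j _ => (hC a j).le) (Finset.mem_univ b)).trans
    (Finset.single_le_sum (f := fun a => ∑ b, C a b)
      (fun i _ => Finset.sum_nonneg fun j _ => (hC i j).le) (Finset.mem_univ a))
end
end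

section
/- In ℝ², let u₀(x) = |x|^{−β₀} ū₀(x/|x|) with β₀ ∈ (0,1), ū₀ ∈ C^{m,β}(𝕊¹) for some integer m ≥ 0 and β ∈ (0,1]. Then for every γ ∈ (0,β), (−Δ)^{γ/2}u₀ is again homogeneous: (−Δ)^{γ/2} u₀(x) = |x|^{−β₀−γ} ũ_{0,γ}(x/|x|) for some ũ_{0,γ} ∈ C^{m,β−γ}(𝕊¹) with ‖ũ_{0,γ}‖_{C^{m,β−γ}(𝕊¹)} ≤ C(m,β₀,β,γ) ‖ū₀‖_{C^{m,β}(𝕊¹)}. -/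
open MeasureTheory

noncomputable section

/-- Parametrization of the unit circle `𝕊¹ ⊂ ℝ²`. -/
def circ (t : ℝ) : E2 := (WithLp.equiv 2 (Fin 2 → ℝ)).symm ![Real.cos t, Real.sin t]

/-- The `(−β₀)`-homogeneous datum `u₀(x) = |x|^{−β₀} ū₀(x/|x|)`. -/
def homData (β₀ : ℝ) (ubar : E2 → ℂ) (x : E2) : ℂ :=
  ((‖x‖ ^ (-β₀ : ℝ) : ℝ) : ℂ) * ubar (‖x‖⁻¹ • x)

/-- `(−Δ)^{γ/2} u₀` via the (absolutely convergent) singular integral, up to `c_γ`. -/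
def fracHom (β₀ γ : ℝ) (ubar : E2 → ℂ) (x : E2) : ℂ :=
  ∫ y : E2, (homData β₀ ubar x - homData β₀ ubar y) / ((‖x - y‖ ^ (2 + γ) : ℝ) : ℂ)

/-- scaling of the Lebesgue integral on the line -/
lemma lint_scale (F : ℝ → ENNReal) (hF : Measurable F) (a : ℝ) (ha : 0 < a) :
    ∫⁻ x, F (a * x) = ENNReal.ofReal a⁻¹ * ∫⁻ x, F x := by
  have h := Real.map_volume_mul_left ha.ne'
  rw [← lintegral_map hF (measurable_const_mul a), h, lintegral_smul_measure,
    abs_of_pos (inv_pos.2 ha), smul_eq_mul]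

lemma lint_one (p : ℝ) (hp : 1 < p) : ∃ C > 0, ∀ a > 0,
    ∫⁻ r : ℝ, ENNReal.ofReal ((a + |1 - r|) ^ (-p)) ≤ ENNReal.ofReal (C * a ^ (1 - p)) := by
  have hfin := finite_integral_one_add_norm (E := ℝ) (μ := volume) (r := p) (by simpa using hp)
  set I := ∫⁻ x : ℝ, ENNReal.ofReal ((1 + ‖x‖) ^ (-p)) with hI
  refine ⟨I.toReal + 1, by positivity, fun a ha => ?_⟩
  have h1 : ∫⁻ r : ℝ, ENNReal.ofReal ((a + |1 - r|) ^ (-p))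
      = ∫⁻ r : ℝ, ENNReal.ofReal ((a + |r|) ^ (-p)) :=
    lintegral_sub_left_eq_self (fun r : ℝ => ENNReal.ofReal ((a + |r|) ^ (-p))) 1
  have h2 := lint_scale (fun r : ℝ => ENNReal.ofReal ((a + |r|) ^ (-p))) (by fun_prop) a ha
  have h3 : ∀ x : ℝ, ENNReal.ofReal ((a + |a * x|) ^ (-p)) =
      ENNReal.ofReal (a ^ (-p)) * ENNReal.ofReal ((1 + ‖x‖) ^ (-p)) := by
    intro x
    rw [← ENNReal.ofReal_mul (by positivity), ← Real.mul_rpow ha.le (by positivity),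
      abs_mul, abs_of_pos ha, Real.norm_eq_abs]
    ring_nf
  simp only [h3] at h2
  rw [lintegral_const_mul _ (by fun_prop), ← hI] at h2
  have h4 : ∫⁻ r : ℝ, ENNReal.ofReal ((a + |r|) ^ (-p)) =
     ENNReal.ofReal a * (ENNReal.ofReal (a ^ (-p)) * I) := by
    rw [h2, ← mul_assoc, ← ENNReal.ofReal_mul ha.le, mul_inv_cancel₀ ha.ne']; simp
  rw [h1, h4, ← mul_assoc, ← ENNReal.ofReal_mul ha.le, ← ENNReal.ofReal_toReal hfin.ne,
    ← ENNReal.ofReal_mul (by positivity)]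
  apply ENNReal.ofReal_le_ofReal
  have : a * a ^ (-p) = a ^ (1 - p) := by
    rw [sub_eq_add_neg, Real.rpow_add ha, Real.rpow_one]
  rw [this]
  have : 0 < a ^ (1 - p) := by positivity
  rw [ENNReal.toReal_ofReal ENNReal.toReal_nonneg]; nlinarith

lemma integrable_comp_abs_aux {f : ℝ → ℝ} (h : IntegrableOn f (Set.Ioi 0)) :
    Integrable (fun x => f |x|) := by
  have hf : IntegrableOn (fun x => f |x|) (Set.Ioi 0) := by
    refine h.congr_fun (fun x hx => ?_) measurableSet_Ioi
    rw [abs_of_pos hx]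
  have int_Iic : IntegrableOn (fun x ↦ f |x|) (Set.Iic 0) := by
    rw [← Measure.map_neg_eq_self (volume : Measure ℝ)]
    let m : MeasurableEmbedding fun x : ℝ => -x := (Homeomorph.neg ℝ).measurableEmbedding
    rw [m.integrableOn_map_iff]
    simp_rw [Function.comp_def, abs_neg, Set.neg_preimage, Set.neg_Iic, neg_zero]
    exact Iff.mpr integrableOn_Ici_iff_integrableOn_Ioi hf
  rw [← integrableOn_univ, ← Set.Iic_union_Ioi (a := (0 : ℝ))]
  exact int_Iic.union hf

lemma fin_min (β γ : ℝ) (hβ0 : 0 < β) (hγ0 : 0 < γ) (hγβ : γ < β) :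
    ∫⁻ s : ℝ, ENNReal.ofReal ((min |s| 1) ^ β * |s| ^ (-1 - γ)) < ⊤ := by
  have hi : IntegrableOn (fun s : ℝ => (min s 1) ^ β * s ^ (-1 - γ)) (Set.Ioi 0) := by
    rw [← Set.Ioc_union_Ioi_eq_Ioi zero_le_one]
    refine IntegrableOn.union ?_ ?_
    · have : IntegrableOn (fun s : ℝ => s ^ (β - 1 - γ)) (Set.Ioc 0 1) := by
        rw [← intervalIntegrable_iff_integrableOn_Ioc_of_le zero_le_one]
        exact intervalIntegral.intervalIntegrable_rpow' (by linarith)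
      refine this.congr_fun (fun s hs => ?_) measurableSet_Ioc
      simp only
      rw [min_eq_left hs.2, ← Real.rpow_add hs.1]; ring_nf
    · refine (integrableOn_Ioi_rpow_of_lt (a := -1 - γ) (by linarith) zero_lt_one).congr_fun
        (fun s hs => ?_) measurableSet_Ioi
      simp only
      rw [min_eq_right (le_of_lt hs)]; simp
  have := integrable_comp_abs_aux hi
  have h2 := this.lintegral_lt_top
  exact h2

lemma lint_min (β γ : ℝ) (hβ0 : 0 < β) (hγ0 : 0 < γ) (hγβ : γ < β) : ∃ C > 0, ∀ δ > 0,
    ∫⁻ s : ℝ, ENNReal.ofReal ((min |s| δ) ^ β * |s| ^ (-1 - γ))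
      ≤ ENNReal.ofReal (C * δ ^ (β - γ)) := by
  have hfin := fin_min β γ hβ0 hγ0 hγβ
  set I := ∫⁻ s : ℝ, ENNReal.ofReal ((min |s| 1) ^ β * |s| ^ (-1 - γ)) with hI
  refine ⟨I.toReal + 1, by positivity, fun a ha => ?_⟩
  have h2 := lint_scale (fun s : ℝ => ENNReal.ofReal ((min |s| a) ^ β * |s| ^ (-1 - γ)))
    (by fun_prop) a ha
  have h3 : ∀ x : ℝ, ENNReal.ofReal ((min |a * x| a) ^ β * |a * x| ^ (-1 - γ)) =
      ENNReal.ofReal (a ^ (β - 1 - γ)) * ENNReal.ofReal ((min |x| 1) ^ β * |x| ^ (-1 - γ)) := by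
    intro x
    rw [← ENNReal.ofReal_mul (by positivity)]
    have e1 : min |a * x| a = a * min |x| 1 := by
      rw [abs_mul, abs_of_pos ha, mul_min_of_nonneg _ _ ha.le, mul_one]
    rw [e1, Real.mul_rpow ha.le (by positivity), abs_mul, abs_of_pos ha,
      Real.mul_rpow ha.le (by positivity), show β - 1 - γ = β + (-1 - γ) by ring, Real.rpow_add ha]
    ring_nf
  simp only [h3] at h2
  rw [lintegral_const_mul _ (by fun_prop), ← hI] at h2
  have h4 : ∫⁻ s : ℝ, ENNReal.ofReal ((min |s| a) ^ β * |s| ^ (-1 - γ)) =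
     ENNReal.ofReal a * (ENNReal.ofReal (a ^ (β - 1 - γ)) * I) := by
    rw [h2, ← mul_assoc, ← ENNReal.ofReal_mul ha.le, mul_inv_cancel₀ ha.ne']; simp
  rw [h4, ← mul_assoc, ← ENNReal.ofReal_mul ha.le, ← ENNReal.ofReal_toReal hfin.ne,
    ← ENNReal.ofReal_mul (by positivity)]
  apply ENNReal.ofReal_le_ofReal
  have : a * a ^ (β - 1 - γ) = a ^ (β - γ) := by
    rw [show β - γ = 1 + (β - 1 - γ) by ring, Real.rpow_add ha, Real.rpow_one]
  rw [this]
  have : 0 < a ^ (β - γ) := by positivity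
  rw [ENNReal.toReal_ofReal ENNReal.toReal_nonneg]; nlinarith

/-- the distance `|1 - r e^{is}|` -/
def Dist1 (p : ℝ × ℝ) : ℝ := ‖1 - Complex.polarCoord.symm p‖

/-- kernel in polar coordinates -/
def Ker (γ : ℝ) (p : ℝ × ℝ) : ℝ := p.1 / (Dist1 p) ^ (2 + γ)

lemma Dist1_cont : Continuous Dist1 := by
  unfold Dist1
  simp only [Complex.polarCoord_symm_apply]
  fun_prop

lemma Ker_meas (γ : ℝ) : Measurable (Ker γ) := by
  unfold Ker
  have := Dist1_cont.measurable
  fun_prop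

lemma Dist1_ge_r (p : ℝ × ℝ) (hp : 0 < p.1) : |1 - p.1| ≤ Dist1 p := by
  unfold Dist1
  have h := abs_norm_sub_norm_le (1 : ℂ) (Complex.polarCoord.symm p)
  rwa [Complex.norm_polarCoord_symm, norm_one, abs_of_pos hp] at h

lemma Dist1_ge_s (p : ℝ × ℝ) (hp : 0 < p.1) (hs : |p.2| < Real.pi) :
    |p.2| / Real.pi ≤ Dist1 p := by
  have hpi := Real.pi_pos
  have hsq : Dist1 p ^ 2 = (1 - p.1 * Real.cos p.2) ^ 2 + (p.1 * Real.sin p.2) ^ 2 := by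
    unfold Dist1
    rw [Complex.polarCoord_symm_apply, Complex.sq_norm, Complex.normSq_apply]
    simp [-Complex.ofReal_cos, -Complex.ofReal_sin]
    ring
  have hD : 0 ≤ Dist1 p := norm_nonneg _
  have hcs := Real.sin_sq_add_cos_sq p.2
  rcases le_total |p.2| (Real.pi / 2) with h | h
  · have h1 := Real.mul_abs_le_abs_sin h
    have h2 : |Real.sin p.2| ≤ Dist1 p := by
      refine abs_le_of_sq_le_sq ?_ hD
      rw [hsq]
      nlinarith [sq_nonneg (p.1 - Real.cos p.2)]
    have h3 : |p.2| / Real.pi ≤ 2 / Real.pi * |p.2| := by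
      rw [div_mul_eq_mul_div]; gcongr; linarith [abs_nonneg p.2]
    linarith
  · have hc : Real.cos p.2 ≤ 0 := by
      rw [← Real.cos_abs]
      exact Real.cos_nonpos_of_pi_div_two_le_of_le h (by linarith)
    have h1 : 1 ≤ Dist1 p := by
      refine le_of_sq_le_sq ?_ hD
      rw [hsq]
      nlinarith [mul_nonneg hp.le (neg_nonneg.2 hc), sq_nonneg (p.1 * Real.cos p.2), sq_nonneg (p.1 * Real.sin p.2)]
    have : |p.2| / Real.pi ≤ 1 := by rw [div_le_one hpi]; exact hs.le
    linarith

lemma Dist1_ge (p : ℝ × ℝ) (hp : 0 < p.1) (hs : |p.2| < Real.pi) :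
    |p.2| + |1 - p.1| ≤ 8 * Dist1 p := by
  have h1 := Dist1_ge_r p hp
  have h2 := Dist1_ge_s p hp hs
  have hD : 0 ≤ Dist1 p := norm_nonneg _
  rw [div_le_iff₀ Real.pi_pos] at h2
  nlinarith [Real.pi_lt_four]

lemma Dist1_rpow (q : ℝ) (hq : 0 < q) (p : ℝ × ℝ) (hp : 0 < p.1) (hs : |p.2| < Real.pi)
    (h0 : p.2 ≠ 0) :
    (Dist1 p) ^ (-q) ≤ 8 ^ q * (|p.2| + |1 - p.1|) ^ (-q) := by
  have h := Dist1_ge p hp hs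
  have h1 : 0 < |p.2| := abs_pos.2 h0
  have h2 : 0 < |p.2| + |1 - p.1| := by positivity
  have h3 := Real.rpow_le_rpow_of_nonpos h2 h (neg_nonpos.2 hq.le)
  rw [Real.mul_rpow (by norm_num) (show 0 ≤ Dist1 p from norm_nonneg _), Real.rpow_neg (by norm_num)] at h3
  rwa [inv_mul_le_iff₀ (by positivity)] at h3

lemma Dist1_pos (p : ℝ × ℝ) (hp : 0 < p.1) (hs : |p.2| < Real.pi)
    (h0 : p.2 ≠ 0) : 0 < Dist1 p := by
  have h := Dist1_ge p hp hs
  have h1 : 0 < |p.2| := abs_pos.2 h0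
  have := abs_nonneg (1 - p.1)
  linarith

lemma one_sub_rpow (b r : ℝ) (hb : 0 < b) (hb1 : b < 1) (hr : 0 < r) :
    r * |1 - r ^ (-b)| ≤ |1 - r| := by
  have e : r ^ (-1 : ℝ) = r⁻¹ := Real.rpow_neg_one r
  rcases le_total r 1 with h | h
  · have h1 : 1 ≤ r ^ (-b) := Real.one_le_rpow_of_pos_of_le_one_of_nonpos hr h (by linarith)
    have h2 : r ^ (-b) ≤ r ^ (-1 : ℝ) := Real.rpow_le_rpow_of_exponent_ge hr h (by linarith)
    rw [abs_of_nonpos (by linarith), abs_of_nonneg (by linarith)]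
    rw [e] at h2
    have : r * r⁻¹ = 1 := mul_inv_cancel₀ hr.ne'
    nlinarith
  · have h1 : r ^ (-b) ≤ 1 := Real.rpow_le_one_of_one_le_of_nonpos h (by linarith)
    have h2 : r ^ (-1 : ℝ) ≤ r ^ (-b) := Real.rpow_le_rpow_of_exponent_le h (by linarith)
    rw [abs_of_nonneg (by linarith), abs_of_nonpos (by linarith)]
    rw [e] at h2
    have : r * r⁻¹ = 1 := mul_inv_cancel₀ hr.ne'
    nlinarith

lemma Ker_le (γ : ℝ) (hγ0 : 0 < γ) : ∃ C > 0, ∀ p : ℝ × ℝ, 0 < p.1 → |p.2| < Real.pi → p.2 ≠ 0 →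
    Ker γ p ≤ C * ((|p.2| + |1 - p.1|) ^ (-(2 + γ)) + (|p.2| + |1 - p.1|) ^ (-(1 + γ))) := by
  refine ⟨8 ^ (2 + γ) + 8 ^ (1 + γ), by positivity, fun p hp hs h0 => ?_⟩
  have hD := Dist1_pos p hp hs h0
  have h1 := Dist1_rpow (2 + γ) (by linarith) p hp hs h0
  have h2 := Dist1_rpow (1 + γ) (by linarith) p hp hs h0
  have h3 := Dist1_ge_r p hp
  have h4 : p.1 ≤ 1 + Dist1 p := by
    have := neg_abs_le (1 - p.1)
    linarith
  have e : Dist1 p * Dist1 p ^ (-(2 + γ)) = Dist1 p ^ (-(1 + γ)) := by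
    rw [show -(1 + γ) = 1 + -(2 + γ) by ring, Real.rpow_add hD, Real.rpow_one]
  have hk : Ker γ p = p.1 * Dist1 p ^ (-(2 + γ)) := by
    unfold Ker; rw [Real.rpow_neg hD.le, div_eq_mul_inv]
  have hx : 0 < Dist1 p ^ (-(2 + γ)) := by positivity
  have h5 : Ker γ p ≤ Dist1 p ^ (-(2 + γ)) + Dist1 p ^ (-(1 + γ)) := by
    rw [hk, ← e]; nlinarith
  have a1 : (0:ℝ) ≤ 8 ^ (2 + γ) * (|p.2| + |1 - p.1|) ^ (-(1 + γ)) := by positivity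
  have a2 : (0:ℝ) ≤ 8 ^ (1 + γ) * (|p.2| + |1 - p.1|) ^ (-(2 + γ)) := by positivity
  nlinarith

lemma KerW_le (b γ : ℝ) (hb : 0 < b) (hb1 : b < 1) (hγ0 : 0 < γ) : ∃ C > 0, ∀ p : ℝ × ℝ,
    0 < p.1 → |p.2| < Real.pi → p.2 ≠ 0 →
    |1 - p.1 ^ (-b)| * Ker γ p ≤ C * (|p.2| + |1 - p.1|) ^ (-(1 + γ)) := by
  refine ⟨8 ^ (1 + γ), by positivity, fun p hp hs h0 => ?_⟩
  have hD := Dist1_pos p hp hs h0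
  have h2 := Dist1_rpow (1 + γ) (by linarith) p hp hs h0
  have h3 := Dist1_ge_r p hp
  have h4 := one_sub_rpow b p.1 hb hb1 hp
  have e : Dist1 p * Dist1 p ^ (-(2 + γ)) = Dist1 p ^ (-(1 + γ)) := by
    rw [show -(1 + γ) = 1 + -(2 + γ) by ring, Real.rpow_add hD, Real.rpow_one]
  have hk : Ker γ p = p.1 * Dist1 p ^ (-(2 + γ)) := by
    unfold Ker; rw [Real.rpow_neg hD.le, div_eq_mul_inv]
  refine le_trans ?_ h2
  rw [hk, ← e, ← mul_assoc]
  gcongr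
  linarith

lemma lint_Ker (γ : ℝ) (hγ0 : 0 < γ) : ∃ C > 0, ∀ s : ℝ, |s| < Real.pi → s ≠ 0 →
    ∫⁻ r in Set.Ioi (0:ℝ), ENNReal.ofReal (Ker γ (r, s)) ≤ ENNReal.ofReal (C * |s| ^ (-1 - γ)) := by
  obtain ⟨C, hC, h⟩ := Ker_le γ hγ0
  obtain ⟨C1, hC1, h1⟩ := lint_one (2 + γ) (by linarith)
  obtain ⟨C2, hC2, h2⟩ := lint_one (1 + γ) (by linarith)
  refine ⟨C * (C1 + 4 * C2), by positivity, fun s hs h0 => ?_⟩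
  have hs0 : 0 < |s| := abs_pos.2 h0
  calc ∫⁻ r in Set.Ioi (0:ℝ), ENNReal.ofReal (Ker γ (r, s))
      ≤ ∫⁻ r in Set.Ioi (0:ℝ), ENNReal.ofReal C *
        (ENNReal.ofReal ((|s| + |1 - r|) ^ (-(2 + γ))) +
          ENNReal.ofReal ((|s| + |1 - r|) ^ (-(1 + γ)))) := by
        refine setLIntegral_mono' measurableSet_Ioi (fun r hr => ?_)
        rw [← ENNReal.ofReal_add (by positivity) (by positivity), ← ENNReal.ofReal_mul hC.le]
        exact ENNReal.ofReal_le_ofReal (h (r, s) hr hs h0)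
    _ ≤ ∫⁻ r, ENNReal.ofReal C *
        (ENNReal.ofReal ((|s| + |1 - r|) ^ (-(2 + γ))) +
          ENNReal.ofReal ((|s| + |1 - r|) ^ (-(1 + γ)))) := setLIntegral_le_lintegral _ _
    _ ≤ ENNReal.ofReal C * (ENNReal.ofReal (C1 * |s| ^ (1 - (2 + γ))) +
          ENNReal.ofReal (C2 * |s| ^ (1 - (1 + γ)))) := by
        rw [lintegral_const_mul _ (by fun_prop), lintegral_add_left (by fun_prop)]
        gcongr
        · exact h1 _ hs0
        · exact h2 _ hs0
    _ ≤ _ := by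
        rw [← ENNReal.ofReal_add (by positivity) (by positivity), ← ENNReal.ofReal_mul hC.le]
        apply ENNReal.ofReal_le_ofReal
        rw [mul_assoc]
        gcongr
        have e : |s| ^ (1 - (1 + γ)) = |s| * |s| ^ (-1 - γ) := by
          rw [show 1 - (1 + γ) = 1 + (-1 - γ) by ring, Real.rpow_add hs0, Real.rpow_one]
        rw [e, show 1 - (2 + γ) = -1 - γ by ring]
        have hx : 0 < |s| ^ (-1 - γ) := by positivity
        have : |s| * |s| ^ (-1 - γ) ≤ 4 * |s| ^ (-1 - γ) := by
          gcongr; linarith [Real.pi_lt_four]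
        nlinarith

lemma lint_KerW (b γ : ℝ) (hb : 0 < b) (hb1 : b < 1) (hγ0 : 0 < γ) :
    ∃ C > 0, ∀ s : ℝ, |s| < Real.pi → s ≠ 0 →
    ∫⁻ r in Set.Ioi (0:ℝ), ENNReal.ofReal (|1 - r ^ (-b)| * Ker γ (r, s))
      ≤ ENNReal.ofReal (C * |s| ^ (-γ)) := by
  obtain ⟨C, hC, h⟩ := KerW_le b γ hb hb1 hγ0
  obtain ⟨C2, hC2, h2⟩ := lint_one (1 + γ) (by linarith)
  refine ⟨C * C2, by positivity, fun s hs h0 => ?_⟩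
  have hs0 : 0 < |s| := abs_pos.2 h0
  calc ∫⁻ r in Set.Ioi (0:ℝ), ENNReal.ofReal (|1 - r ^ (-b)| * Ker γ (r, s))
      ≤ ∫⁻ r in Set.Ioi (0:ℝ), ENNReal.ofReal C *
          ENNReal.ofReal ((|s| + |1 - r|) ^ (-(1 + γ))) := by
        refine setLIntegral_mono' measurableSet_Ioi (fun r hr => ?_)
        rw [← ENNReal.ofReal_mul hC.le]
        exact ENNReal.ofReal_le_ofReal (h (r, s) hr hs h0)
    _ ≤ ∫⁻ r, ENNReal.ofReal C *
          ENNReal.ofReal ((|s| + |1 - r|) ^ (-(1 + γ))) := setLIntegral_le_lintegral _ _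
    _ ≤ ENNReal.ofReal C * 
          ENNReal.ofReal (C2 * |s| ^ (1 - (1 + γ))) := by
        rw [lintegral_const_mul _ (by fun_prop)]
        gcongr
        exact h2 _ hs0
    _ ≤ _ := by
        rw [← ENNReal.ofReal_mul hC.le]
        apply ENNReal.ofReal_le_ofReal
        rw [mul_assoc, show 1 - (1 + γ) = -γ by ring]

/-- the measure `dr ds` on the polar strip -/
def polMeas : Measure (ℝ × ℝ) := volume.restrict polarCoord.target

lemma polMeas_eq : polMeas =
    (volume.restrict (Set.Ioi 0)).prod (volume.restrict (Set.Ioo (-Real.pi) Real.pi)) := by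
  rw [Measure.prod_restrict]; rfl

lemma polMeas_ae : ∀ᵐ p ∂polMeas, 0 < p.1 ∧ |p.2| < Real.pi := by
  have : MeasurableSet polarCoord.target := polarCoord.open_target.measurableSet
  filter_upwards [ae_restrict_mem this] with p hp
  rw [polarCoord_target] at hp
  exact ⟨hp.1, abs_lt.2 hp.2⟩

lemma Ker_nonneg (γ : ℝ) (p : ℝ × ℝ) (hp : 0 < p.1) : 0 ≤ Ker γ p := by
  unfold Ker
  have : 0 ≤ Dist1 p := norm_nonneg _
  positivity

lemma lint_pol (F : ℝ × ℝ → ENNReal) (hF : Measurable F) (ψ : ℝ → ENNReal)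
    (h : ∀ s : ℝ, |s| < Real.pi → s ≠ 0 → ∫⁻ r in Set.Ioi (0:ℝ), F (r, s) ≤ ψ s) :
    ∫⁻ p, F p ∂polMeas ≤ ∫⁻ s in Set.Ioo (-Real.pi) Real.pi, ψ s := by
  rw [polMeas_eq, lintegral_prod_symm _ hF.aemeasurable]
  apply lintegral_mono_ae
  have h0 : ∀ᵐ s ∂(volume.restrict (Set.Ioo (-Real.pi) Real.pi)), s ≠ 0 :=
    ae_restrict_of_ae (by simp [ae_iff])
  filter_upwards [ae_restrict_mem measurableSet_Ioo, h0] with s hs hs0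
  exact h s (abs_lt.2 hs) hs0

lemma ker_min (β γ : ℝ) (hβ0 : 0 < β) (hγ0 : 0 < γ) (hγβ : γ < β) : ∃ C > 0, ∀ δ > 0,
    ∫⁻ p, ENNReal.ofReal ((min |p.2| δ) ^ β * Ker γ p) ∂polMeas
      ≤ ENNReal.ofReal (C * δ ^ (β - γ)) := by
  obtain ⟨C1, hC1, h1⟩ := lint_Ker γ hγ0
  obtain ⟨C2, hC2, h2⟩ := lint_min β γ hβ0 hγ0 hγβ
  refine ⟨C1 * C2, by positivity, fun δ hδ => ?_⟩
  have hm := Ker_meas γ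
  refine (lint_pol _ (by fun_prop)
    (fun s => ENNReal.ofReal C1 * ENNReal.ofReal ((min |s| δ) ^ β * |s| ^ (-1 - γ))) ?_).trans ?_
  · intro s hs h0
    have : ∀ r, ENNReal.ofReal ((min |s| δ) ^ β * Ker γ (r, s)) =
      ENNReal.ofReal ((min |s| δ) ^ β) * ENNReal.ofReal (Ker γ (r, s)) := fun r =>
        ENNReal.ofReal_mul (by positivity)
    simp only [this]
    rw [lintegral_const_mul _ (by fun_prop)]
    refine (mul_le_mul_right (h1 s hs h0) _).trans ?_
    rw [← ENNReal.ofReal_mul (by positivity), ← ENNReal.ofReal_mul (by positivity)]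
    apply le_of_eq; congr 1; ring
  · refine (setLIntegral_le_lintegral _ _).trans ?_
    rw [lintegral_const_mul _ (by fun_prop)]
    refine (mul_le_mul_right (h2 δ hδ) _).trans ?_
    rw [← ENNReal.ofReal_mul (by positivity), mul_assoc]

lemma ker_w (b γ : ℝ) (hb : 0 < b) (hb1 : b < 1) (hγ0 : 0 < γ) (hγ1 : γ < 1) : ∃ C > 0,
    ∫⁻ p, ENNReal.ofReal (|1 - p.1 ^ (-b)| * Ker γ p) ∂polMeas ≤ ENNReal.ofReal C := by
  obtain ⟨C1, hC1, h1⟩ := lint_KerW b γ hb hb1 hγ0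
  have hi : IntegrableOn (fun s : ℝ => C1 * |s| ^ (-γ)) (Set.Ioo (-Real.pi) Real.pi) := by
    apply Integrable.const_mul
    have : IntegrableOn ((Set.Iio Real.pi).indicator (fun s : ℝ => s ^ (-γ))) (Set.Ioi 0) := by
      rw [IntegrableOn, integrable_indicator_iff measurableSet_Iio, IntegrableOn,
        Measure.restrict_restrict measurableSet_Iio, Set.inter_comm, Set.Ioi_inter_Iio]
      have := (intervalIntegrable_iff_integrableOn_Ioo_of_le Real.pi_pos.le).1
        (intervalIntegral.intervalIntegrable_rpow' (a := 0) (b := Real.pi) (r := -γ) (by linarith))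
      exact this
    have h3 := (integrable_comp_abs_aux this).integrableOn (s := Set.Ioo (-Real.pi) Real.pi)
    refine h3.congr_fun (fun s hs => ?_) measurableSet_Ioo
    have : |s| ∈ Set.Iio Real.pi := abs_lt.2 hs
    simp only [Set.indicator_of_mem this]
  have hfin := hi.lintegral_lt_top
  have hm := Ker_meas γ
  refine ⟨_, ?_, (lint_pol _ (by fun_prop) _ h1).trans (?_ : _ ≤ ENNReal.ofReal ((∫⁻ (x : ℝ) in Set.Ioo (-Real.pi) Real.pi, ENNReal.ofReal (C1 * |x| ^ (-γ))).toReal + 1))⟩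
  · positivity
  · rw [← ENNReal.ofReal_toReal hfin.ne]
    apply ENNReal.ofReal_le_ofReal
    rw [ENNReal.toReal_ofReal ENNReal.toReal_nonneg]; linarith

lemma ker_min_int (β γ : ℝ) (hβ0 : 0 < β) (hγ0 : 0 < γ) (hγβ : γ < β) : ∃ C > 0, ∀ δ > 0,
    Integrable (fun p => (min |p.2| δ) ^ β * Ker γ p) polMeas ∧
    ∫ p, (min |p.2| δ) ^ β * Ker γ p ∂polMeas ≤ C * δ ^ (β - γ) := by
  obtain ⟨C, hC, h⟩ := ker_min β γ hβ0 hγ0 hγβ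
  refine ⟨C, hC, fun δ hδ => ?_⟩
  have hm := Ker_meas γ
  have hn : 0 ≤ᵐ[polMeas] (fun p => (min |p.2| δ) ^ β * Ker γ p) := by
    filter_upwards [polMeas_ae] with p hp
    have := Ker_nonneg γ p hp.1
    simp only [Pi.zero_apply]
    positivity
  have hmm : AEStronglyMeasurable (fun p => (min |p.2| δ) ^ β * Ker γ p) polMeas :=
    Measurable.aestronglyMeasurable (by fun_prop)
  constructor
  · exact ⟨hmm, (hasFiniteIntegral_iff_ofReal hn).2 ((h δ hδ).trans_lt ENNReal.ofReal_lt_top)⟩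
  · rw [integral_eq_lintegral_of_nonneg_ae hn hmm]
    exact ENNReal.toReal_le_of_le_ofReal (by positivity) (h δ hδ)

lemma ker_w_int (b γ : ℝ) (hb : 0 < b) (hb1 : b < 1) (hγ0 : 0 < γ) (hγ1 : γ < 1) :
    Integrable (fun p => |1 - p.1 ^ (-b)| * Ker γ p) polMeas := by
  obtain ⟨C, hC, h⟩ := ker_w b γ hb hb1 hγ0 hγ1
  have hm := Ker_meas γ
  have hn : 0 ≤ᵐ[polMeas] (fun p => |1 - p.1 ^ (-b)| * Ker γ p) := by
    filter_upwards [polMeas_ae] with p hp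
    have := Ker_nonneg γ p hp.1
    simp only [Pi.zero_apply]
    positivity
  have hmm : AEStronglyMeasurable (fun p => |1 - p.1 ^ (-b)| * Ker γ p) polMeas :=
    Measurable.aestronglyMeasurable (by fun_prop)
  exact ⟨hmm, (hasFiniteIntegral_iff_ofReal hn).2 (h.trans_lt ENNReal.ofReal_lt_top)⟩

/-- Hölder class with constant `M` -/
def HClass (β M : ℝ) (h : ℝ → ℂ) : Prop :=
  Continuous h ∧ (∀ t, ‖h t‖ ≤ M) ∧ ∀ t t', ‖h t - h t'‖ ≤ M * |t - t'| ^ β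

/-- integrand of the operator in polar coordinates -/
def GInt (b γ : ℝ) (h : ℝ → ℂ) (t : ℝ) (p : ℝ × ℝ) : ℂ :=
  (Ker γ p : ℂ) * (h t - ((p.1 ^ (-b) : ℝ) : ℂ) * h (t + p.2))

/-- the operator in polar coordinates -/
def GOp (b γ : ℝ) (h : ℝ → ℂ) (t : ℝ) : ℂ := ∫ p, GInt b γ h t p ∂polMeas

/-- dominating function -/
def Bd (b β γ : ℝ) (p : ℝ × ℝ) : ℝ :=
  (min |p.2| 4) ^ β * Ker γ p + |1 - p.1 ^ (-b)| * Ker γ p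

lemma GInt_meas (b γ : ℝ) (h : ℝ → ℂ) (hc : Continuous h) (t : ℝ) :
    AEStronglyMeasurable (GInt b γ h t) polMeas := by
  have hm := Ker_meas γ
  have := hc.measurable
  refine Measurable.aestronglyMeasurable ?_
  unfold GInt
  have h2 : Measurable (fun p : ℝ × ℝ => h (t + p.2)) := by fun_prop
  fun_prop

lemma GInt_le (b β γ M : ℝ) (hβ0 : 0 < β) (h : ℝ → ℂ) (hh : HClass β M h) (t : ℝ) (p : ℝ × ℝ)
    (hp : 0 < p.1) (hs : |p.2| < Real.pi) : ‖GInt b γ h t p‖ ≤ M * Bd b β γ p := by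
  obtain ⟨hc, hb, hH⟩ := hh
  have hK := Ker_nonneg γ p hp
  have e : h t - ((p.1 ^ (-b) : ℝ) : ℂ) * h (t + p.2) =
    (h t - h (t + p.2)) + ((1 - p.1 ^ (-b) : ℝ) : ℂ) * h (t + p.2) := by push_cast; ring
  have h1 := hH t (t + p.2)
  rw [show t - (t + p.2) = - p.2 by ring, abs_neg] at h1
  have h2 : ‖((1 - p.1 ^ (-b) : ℝ) : ℂ) * h (t + p.2)‖ ≤ |1 - p.1 ^ (-b)| * M := by
    rw [norm_mul, Complex.norm_real, Real.norm_eq_abs]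
    gcongr
    exact hb _
  have h3 := (norm_add_le (h t - h (t + p.2)) (((1 - p.1 ^ (-b) : ℝ) : ℂ) * h (t + p.2))).trans
    (add_le_add h1 h2)
  unfold GInt Bd
  rw [min_eq_left (by linarith [Real.pi_lt_four]), norm_mul, Complex.norm_real, Real.norm_eq_abs,
    abs_of_nonneg hK, e]
  refine (mul_le_mul_of_nonneg_left h3 hK).trans (le_of_eq (by ring))

lemma Bd_int (b β γ : ℝ) (hb : 0 < b) (hb1 : b < 1) (hγ0 : 0 < γ) (hγ1 : γ < 1) (hγβ : γ < β) :
    Integrable (Bd b β γ) polMeas := by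
  obtain ⟨C, hC, h⟩ := ker_min_int β γ (by linarith) hγ0 hγβ
  exact (h 4 (by norm_num)).1.add (ker_w_int b γ hb hb1 hγ0 hγ1)

lemma GInt_int (b β γ M : ℝ) (hb : 0 < b) (hb1 : b < 1) (hγ0 : 0 < γ) (hγ1 : γ < 1) (hγβ : γ < β)
    (h : ℝ → ℂ) (hh : HClass β M h) (t : ℝ) : Integrable (GInt b γ h t) polMeas := by
  refine ((Bd_int b β γ hb hb1 hγ0 hγ1 hγβ).const_mul M).mono' (GInt_meas b γ h hh.1 t) ?_
  filter_upwards [polMeas_ae] with p hp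
  exact GInt_le b β γ M (by linarith) h hh t p hp.1 hp.2

lemma GOp_bound (b β γ : ℝ) (hb : 0 < b) (hb1 : b < 1) (hγ0 : 0 < γ) (hγ1 : γ < 1) (hγβ : γ < β) :
    ∃ C > 0, ∀ (M : ℝ) (h : ℝ → ℂ), HClass β M h → ∀ t, ‖GOp b γ h t‖ ≤ C * M := by
  refine ⟨|∫ p, Bd b β γ p ∂polMeas| + 1, by positivity, fun M h hh t => ?_⟩
  have hM : 0 ≤ M := (norm_nonneg _).trans (hh.2.1 0)
  have := norm_integral_le_of_norm_le ((Bd_int b β γ hb hb1 hγ0 hγ1 hγβ).const_mul M)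
    (f := GInt b γ h t) (by
      filter_upwards [polMeas_ae] with p hp
      exact GInt_le b β γ M (by linarith) h hh t p hp.1 hp.2)
  refine this.trans ?_
  rw [integral_const_mul]
  nlinarith [le_abs_self (∫ p, Bd b β γ p ∂polMeas)]

lemma GInt_diff (b β γ M : ℝ) (hβ0 : 0 < β) (h : ℝ → ℂ) (hh : HClass β M h) (t t' : ℝ)
    (p : ℝ × ℝ) (hp : 0 < p.1) :
    ‖GInt b γ h t p - GInt b γ h t' p‖ ≤ 2 * M * ((min |p.2| |t - t'|) ^ β * Ker γ p)
      + M * |t - t'| ^ β * (|1 - p.1 ^ (-b)| * Ker γ p) := by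
  obtain ⟨hc, hb, hH⟩ := hh
  have hK := Ker_nonneg γ p hp
  have e : GInt b γ h t p - GInt b γ h t' p = (Ker γ p : ℂ) *
    (((h t - h (t + p.2)) - (h t' - h (t' + p.2)))
     + ((1 - p.1 ^ (-b) : ℝ) : ℂ) * (h (t + p.2) - h (t' + p.2))) := by
       unfold GInt; push_cast; ring
  have h1 := hH t (t + p.2)
  rw [show t - (t + p.2) = - p.2 by ring, abs_neg] at h1
  have h1' := hH t' (t' + p.2)
  rw [show t' - (t' + p.2) = - p.2 by ring, abs_neg] at h1'
  have h3 := hH (t + p.2) (t' + p.2)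
  rw [show t + p.2 - (t' + p.2) = t - t' by ring] at h3
  have h4 := hH t t'
  have h2 : ‖((1 - p.1 ^ (-b) : ℝ) : ℂ) * (h (t + p.2) - h (t' + p.2))‖
      ≤ |1 - p.1 ^ (-b)| * (M * |t - t'| ^ β) := by
    rw [norm_mul, Complex.norm_real, Real.norm_eq_abs]
    gcongr
  have h5 : ‖(h t - h (t + p.2)) - (h t' - h (t' + p.2))‖ ≤ 2 * M * (min |p.2| |t - t'|) ^ β := by
    rcases le_total |p.2| |t - t'| with hle | hle
    · rw [min_eq_left hle]
      refine (norm_sub_le _ _).trans ?_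
      linarith
    · rw [min_eq_right hle]
      rw [show (h t - h (t + p.2)) - (h t' - h (t' + p.2)) =
        (h t - h t') - (h (t + p.2) - h (t' + p.2)) by ring]
      refine (norm_sub_le _ _).trans ?_
      linarith
  rw [e, norm_mul, Complex.norm_real, Real.norm_eq_abs, abs_of_nonneg hK]
  refine (mul_le_mul_of_nonneg_left ((norm_add_le _ _).trans (add_le_add h5 h2)) hK).trans
    (le_of_eq (by ring))

lemma GOp_holder (b β γ : ℝ) (hb : 0 < b) (hb1 : b < 1) (hγ0 : 0 < γ) (hγ1 : γ < 1)
    (hγβ : γ < β) : ∃ C > 0, ∀ (M : ℝ) (h : ℝ → ℂ), HClass β M h → ∀ t t',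
      ‖GOp b γ h t - GOp b γ h t'‖ ≤ C * M * |t - t'| ^ (β - γ) := by
  obtain ⟨C0, hC0, h0⟩ := GOp_bound b β γ hb hb1 hγ0 hγ1 hγβ
  obtain ⟨C1, hC1, h1⟩ := ker_min_int β γ (by linarith) hγ0 hγβ
  have hw := ker_w_int b γ hb hb1 hγ0 hγ1
  set W := ∫ p, |1 - p.1 ^ (-b)| * Ker γ p ∂polMeas with hW
  refine ⟨2 * C0 + 2 * C1 + |W|, by positivity, fun M h hh t t' => ?_⟩
  have hM : 0 ≤ M := (norm_nonneg _).trans (hh.2.1 0)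
  rcases eq_or_ne t t' with rfl | hne
  · simp only [sub_self, norm_zero]; positivity
  have hδ : 0 < |t - t'| := abs_pos.2 (sub_ne_zero.2 hne)
  set δ := |t - t'| with hδd
  rcases le_total δ 1 with hle | hle
  · have hi := h1 δ hδ
    have key : ‖GOp b γ h t - GOp b γ h t'‖ ≤
        2 * M * (∫ p, (min |p.2| δ) ^ β * Ker γ p ∂polMeas) + M * δ ^ β * W := by
      unfold GOp
      rw [← integral_sub (GInt_int b β γ M hb hb1 hγ0 hγ1 hγβ h hh t)
        (GInt_int b β γ M hb hb1 hγ0 hγ1 hγβ h hh t'), ← integral_const_mul, hW,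
        ← integral_const_mul, ← integral_add (hi.1.const_mul _) (hw.const_mul _)]
      refine norm_integral_le_of_norm_le ((hi.1.const_mul _).add (hw.const_mul _)) ?_
      filter_upwards [polMeas_ae] with p hp
      exact GInt_diff b β γ M (by linarith) h hh t t' p hp.1
    have h2 : δ ^ β ≤ δ ^ (β - γ) := Real.rpow_le_rpow_of_exponent_ge hδ hle (by linarith)
    have h3 : M * δ ^ β * W ≤ M * δ ^ (β - γ) * |W| := by
      refine (mul_le_mul_of_nonneg_left (le_abs_self W) (by positivity)).trans ?_
      gcongr
    have h4 : 2 * M * (∫ p, (min |p.2| δ) ^ β * Ker γ p ∂polMeas)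
        ≤ 2 * M * (C1 * δ ^ (β - γ)) := by
      gcongr; exact hi.2
    have h5 : 0 ≤ C0 * M * δ ^ (β - γ) := by positivity
    nlinarith
  · have h2 : 1 ≤ δ ^ (β - γ) := Real.one_le_rpow hle (by linarith)
    have h3 := h0 M h hh t
    have h4 := h0 M h hh t'
    have h5 := norm_sub_le (GOp b γ h t) (GOp b γ h t')
    have h6 : 2 * C0 * M * 1 ≤ (2 * C0 + 2 * C1 + |W|) * M * δ ^ (β - γ) := by
      gcongr
      have := abs_nonneg W
      linarith
    linarith

lemma GOp_deriv (b β γ M : ℝ) (hb : 0 < b) (hb1 : b < 1) (hγ0 : 0 < γ) (hγ1 : γ < 1)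
    (hγβ : γ < β) (h h' : ℝ → ℂ) (hh : HClass β M h) (hh' : HClass β M h')
    (hd : ∀ t, HasDerivAt h (h' t) t) (t : ℝ) :
    HasDerivAt (GOp b γ h) (GOp b γ h' t) t := by
  refine (hasDerivAt_integral_of_dominated_loc_of_deriv_le (s := Set.univ) Filter.univ_mem
    (F := GInt b γ h) (F' := GInt b γ h') (bound := fun p => M * Bd b β γ p) ?_ ?_ ?_ ?_ ?_ ?_).2
  · exact Filter.Eventually.of_forall (fun x => GInt_meas b γ h hh.1 x)
  · exact GInt_int b β γ M hb hb1 hγ0 hγ1 hγβ h hh t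
  · exact GInt_meas b γ h' hh'.1 t
  · filter_upwards [polMeas_ae] with p hp x _
    exact GInt_le b β γ M (by linarith) h' hh' x p hp.1 hp.2
  · exact (Bd_int b β γ hb hb1 hγ0 hγ1 hγβ).const_mul M
  · refine Filter.Eventually.of_forall (fun p x _ => ?_)
    unfold GInt
    exact ((hd x).sub (((hd (x + p.2)).comp_add_const x p.2).const_mul _)).const_mul _

lemma HClass_iter (β M : ℝ) (hβ0 : 0 < β) (hβ1 : β ≤ 1) (m : ℕ) (f : ℝ → ℂ)
    (hf : ContDiff ℝ (m : ℕ∞) f) (hb : ∀ i ≤ m, ∀ t, ‖iteratedDeriv i f t‖ ≤ M)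
    (hH : ∀ t t', ‖iteratedDeriv m f t - iteratedDeriv m f t'‖ ≤ M * |t - t'| ^ β)
    (i : ℕ) (hi : i ≤ m) : HClass β (2 * M) (iteratedDeriv i f) := by
  have hM : 0 ≤ M := (norm_nonneg _).trans (hb 0 (Nat.zero_le _) 0)
  obtain ⟨hc, hd⟩ := contDiff_iff_iteratedDeriv.1 hf
  refine ⟨hc i (by exact_mod_cast hi), fun t => (hb i hi t).trans (by linarith), fun t t' => ?_⟩
  rcases hi.eq_or_lt with rfl | hlt
  · refine (hH t t').trans ?_
    gcongr; linarith
  · have hL : ‖iteratedDeriv i f t - iteratedDeriv i f t'‖ ≤ M * ‖t - t'‖ := by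
      refine Convex.norm_image_sub_le_of_norm_deriv_le (s := Set.univ)
        (fun x _ => hd i (by exact_mod_cast hlt) x) (fun x _ => ?_) convex_univ trivial trivial
      rw [← iteratedDeriv_succ]
      exact hb (i + 1) hlt x
    rw [Real.norm_eq_abs] at hL
    rcases le_total |t - t'| 1 with h1 | h1
    · have : |t - t'| ≤ |t - t'| ^ β := by
        rcases (abs_nonneg (t - t')).eq_or_lt with h0 | h0
        · rw [← h0]; positivity
        · simpa using Real.rpow_le_rpow_of_exponent_ge h0 h1 hβ1
      have h3 : M * |t - t'| ≤ M * |t - t'| ^ β := by gcongr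
      have h4 : 0 ≤ M * |t - t'| ^ β := by positivity
      linarith
    · have h2 : 1 ≤ |t - t'| ^ β := Real.one_le_rpow h1 hβ0.le
      have h3 := norm_sub_le (iteratedDeriv i f t) (iteratedDeriv i f t')
      have h4 := hb i hi t
      have h5 := hb i hi t'
      nlinarith

lemma GOp_iter (b β γ M : ℝ) (hb : 0 < b) (hb1 : b < 1) (hγ0 : 0 < γ) (hγ1 : γ < 1)
    (hγβ : γ < β) (m : ℕ) (f : ℝ → ℂ) (hf : ContDiff ℝ (m : ℕ∞) f)
    (hh : ∀ i ≤ m, HClass β M (iteratedDeriv i f)) :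
    (∀ i ≤ m, iteratedDeriv i (GOp b γ f) = GOp b γ (iteratedDeriv i f)) ∧
    ∀ i < m, ∀ t, HasDerivAt (GOp b γ (iteratedDeriv i f)) (GOp b γ (iteratedDeriv (i+1) f) t) t := by
  obtain ⟨hc, hd⟩ := contDiff_iff_iteratedDeriv.1 hf
  have h2 : ∀ i < m, ∀ t,
      HasDerivAt (GOp b γ (iteratedDeriv i f)) (GOp b γ (iteratedDeriv (i+1) f) t) t := by
    intro i hi t
    refine GOp_deriv b β γ M hb hb1 hγ0 hγ1 hγβ _ _ (hh i hi.le) (hh (i+1) hi) (fun x => ?_) t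
    rw [iteratedDeriv_succ]
    exact (hd i (by exact_mod_cast hi) x).hasDerivAt
  refine ⟨fun i => ?_, h2⟩
  induction i with
  | zero => intro _; simp
  | succ i ih =>
    intro hi
    rw [iteratedDeriv_succ, ih (by omega)]
    funext t
    exact (h2 i hi t).deriv

/-- rotated identification of the complex plane with `E2` -/
def Lrot (t : ℝ) : ℂ ≃ₗᵢ[ℝ] E2 :=
  (rotation (Circle.exp t)).trans Complex.orthonormalBasisOneI.repr

lemma Lrot_polar (t r s : ℝ) : Lrot t (Complex.polarCoord.symm (r, s)) = r • circ (t + s) := by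
  have e : Complex.polarCoord.symm (r, s) = (r : ℂ) * Complex.exp (s * Complex.I) := by
    rw [Complex.polarCoord_symm_apply, Complex.exp_mul_I]; push_cast; rfl
  have e2 : (Circle.exp t : ℂ) * ((r : ℂ) * Complex.exp (s * Complex.I)) =
      (r : ℂ) * Complex.exp ((t + s : ℝ) * Complex.I) := by
    rw [Circle.coe_exp]; push_cast; rw [add_mul, Complex.exp_add]; ring
  unfold Lrot circ
  rw [e, LinearIsometryEquiv.trans_apply, rotation_apply, e2]
  ext i
  rw [Complex.orthonormalBasisOneI_repr_apply]
  fin_cases i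
  · simp [-Complex.ofReal_add, Complex.exp_ofReal_mul_I_re]
  · simp [-Complex.ofReal_add, Complex.exp_ofReal_mul_I_im]

lemma norm_circ (t : ℝ) : ‖circ t‖ = 1 := by
  unfold circ
  rw [EuclideanSpace.norm_eq]
  simp

lemma homData_circ (b : ℝ) (u : E2 → ℂ) (r t : ℝ) (hr : 0 < r) :
    homData b u (r • circ t) = ((r ^ (-b) : ℝ) : ℂ) * u (circ t) := by
  unfold homData
  rw [norm_smul, norm_circ, mul_one, Real.norm_eq_abs, abs_of_pos hr, smul_smul,
    inv_mul_cancel₀ hr.ne', one_smul]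

lemma fracHom_circ (b γ : ℝ) (u : E2 → ℂ) (t : ℝ) :
    fracHom b γ u (circ t) = GOp b γ (fun t => u (circ t)) t := by
  unfold fracHom
  rw [← (LinearIsometryEquiv.measurePreserving (Lrot t)).integral_comp
    (Lrot t).toHomeomorph.measurableEmbedding, ← Complex.integral_comp_polarCoord_symm]
  unfold GOp polMeas
  refine setIntegral_congr_fun polarCoord.open_target.measurableSet (fun p hp => ?_)
  rw [polarCoord_target] at hp
  have hp1 : 0 < p.1 := hp.1
  have h1 : circ t = Lrot t 1 := by
    have := Lrot_polar t 1 0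
    rw [Complex.polarCoord_symm_apply] at this
    simpa using this.symm
  have h2 : ‖circ t - Lrot t (Complex.polarCoord.symm p)‖ = Dist1 p := by
    rw [h1, ← map_sub, LinearIsometryEquiv.norm_map]; rfl
  have h3 := homData_circ b u 1 t one_pos
  rw [h2, show p = (p.1, p.2) from rfl, Lrot_polar, homData_circ b u _ _ hp1]
  rw [one_smul] at h3
  rw [h3]
  unfold GInt Ker
  rw [Complex.real_smul]
  push_cast
  simp
  ring

lemma homData_smul (b : ℝ) (u : E2 → ℂ) (r : ℝ) (hr : 0 < r) (x : E2) :
    homData b u (r • x) = ((r ^ (-b) : ℝ) : ℂ) * homData b u x := by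
  unfold homData
  rw [norm_smul, Real.norm_eq_abs, abs_of_pos hr, Real.mul_rpow hr.le (norm_nonneg _), smul_smul]
  have : (r * ‖x‖)⁻¹ * r = ‖x‖⁻¹ := by
    rw [mul_inv]; field_simp
  rw [this]; push_cast; ring

lemma fracHom_smul (b γ : ℝ) (u : E2 → ℂ) (r : ℝ) (hr : 0 < r) (x : E2) :
    fracHom b γ u (r • x) = ((r ^ (-b - γ) : ℝ) : ℂ) * fracHom b γ u x := by
  have h := Measure.integral_comp_smul (volume : Measure E2) (fun y : E2 =>
    (homData b u (r • x) - homData b u y) / ((‖r • x - y‖ ^ (2 + γ) : ℝ) : ℂ)) r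
  have e : ∀ y : E2, (homData b u (r • x) - homData b u (r • y)) /
      ((‖r • x - r • y‖ ^ (2 + γ) : ℝ) : ℂ) = ((r ^ (-b - γ - 2) : ℝ) : ℂ) *
      ((homData b u x - homData b u y) / ((‖x - y‖ ^ (2 + γ) : ℝ) : ℂ)) := by
    intro y
    rw [homData_smul b u r hr, homData_smul b u r hr, ← smul_sub, norm_smul, Real.norm_eq_abs,
      abs_of_pos hr, Real.mul_rpow hr.le (norm_nonneg _),
      show -b - γ - 2 = -b - (2 + γ) by ring, Real.rpow_sub hr]
    push_cast
    rw [← mul_sub, mul_div_mul_comm]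
  simp only [e] at h
  rw [integral_const_mul] at h
  have hfr : Module.finrank ℝ E2 = 2 := by simp
  rw [hfr, abs_of_pos (by positivity)] at h
  have e1 : fracHom b γ u (r • x) = ((r ^ 2 : ℝ) : ℂ) * (((r ^ (-b - γ - 2) : ℝ) : ℂ) *
      fracHom b γ u x) := by
    have hr2 : ((r ^ 2 : ℝ) : ℂ) * (((r ^ 2)⁻¹ : ℝ) : ℂ) = 1 := by
      rw [← Complex.ofReal_mul, mul_inv_cancel₀ (by positivity)]; simp
    unfold fracHom at *
    rw [h, Complex.real_smul, ← mul_assoc, hr2, one_mul]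
  rw [e1, ← mul_assoc, ← Complex.ofReal_mul, ← Real.rpow_natCast, ← Real.rpow_add hr]
  congr 3
  push_cast; ring

/-- the fractional Laplacian of an `(−β₀)`-homogeneous datum with
`C^{m,β}(𝕊¹)` angular part is `(−β₀−γ)`-homogeneous with `C^{m,β−γ}(𝕊¹)` angular part
`ũ_{0,γ}`, with `‖ũ_{0,γ}‖_{C^{m,β−γ}} ≤ C(m,β₀,β,γ) ‖ū₀‖_{C^{m,β}}`.
The `C^{m,β}` data is encoded through the circle parametrization `circ`. -/
theorem fracLap_homogeneous (β₀ β γ : ℝ) (m : ℕ)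
    (hβ₀ : β₀ ∈ Set.Ioo (0:ℝ) 1) (hβ0 : 0 < β) (hβ1 : β ≤ 1) (hγ0 : 0 < γ) (hγβ : γ < β) :
    ∃ C > 0, ∀ (ubar : E2 → ℂ) (M : ℝ),
      ContDiff ℝ (m : ℕ∞) (fun t => ubar (circ t)) →
      (∀ i ≤ m, ∀ t : ℝ, ‖iteratedDeriv i (fun t => ubar (circ t)) t‖ ≤ M) →
      (∀ t t' : ℝ, ‖iteratedDeriv m (fun t => ubar (circ t)) t
          - iteratedDeriv m (fun t => ubar (circ t)) t'‖ ≤ M * |t - t'| ^ β) →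
      ∃ utilde : E2 → ℂ,
        (∀ x : E2, x ≠ 0 →
          fracHom β₀ γ ubar x = ((‖x‖ ^ (-β₀ - γ : ℝ) : ℝ) : ℂ) * utilde (‖x‖⁻¹ • x)) ∧
        ContDiff ℝ (m : ℕ∞) (fun t => utilde (circ t)) ∧
        (∀ i ≤ m, ∀ t : ℝ, ‖iteratedDeriv i (fun t => utilde (circ t)) t‖ ≤ C * M) ∧
        (∀ t t' : ℝ, ‖iteratedDeriv m (fun t => utilde (circ t)) t
            - iteratedDeriv m (fun t => utilde (circ t)) t'‖ ≤ C * M * |t - t'| ^ (β - γ)) := by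
  obtain ⟨hb, hb1⟩ := hβ₀
  have hγ1 : γ < 1 := by linarith
  obtain ⟨C1, hC1, h1⟩ := GOp_bound β₀ β γ hb hb1 hγ0 hγ1 hγβ
  obtain ⟨C2, hC2, h2⟩ := GOp_holder β₀ β γ hb hb1 hγ0 hγ1 hγβ
  refine ⟨2 * C1 + 2 * C2, by positivity, fun ubar M hf hbd hH => ?_⟩
  set f : ℝ → ℂ := fun t => ubar (circ t) with hfd
  have hM : 0 ≤ M := (norm_nonneg _).trans (hbd 0 (Nat.zero_le _) 0)
  have hcl := HClass_iter β M hβ0 hβ1 m f hf hbd hH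
  obtain ⟨hit, hder⟩ := GOp_iter β₀ β γ (2 * M) hb hb1 hγ0 hγ1 hγβ m f hf hcl
  have hG : (fun t => fracHom β₀ γ ubar (circ t)) = GOp β₀ γ f :=
    funext (fun t => fracHom_circ β₀ γ ubar t)
  have hcm : Continuous (GOp β₀ γ (iteratedDeriv m f)) := by
    rw [continuous_iff_continuousAt]
    intro t
    rw [ContinuousAt, tendsto_iff_norm_sub_tendsto_zero]
    have hlim : Filter.Tendsto (fun x : ℝ => C2 * (2 * M) * |x - t| ^ (β - γ)) (nhds t)
        (nhds 0) := by
      have hc : Continuous (fun x : ℝ => C2 * (2 * M) * |x - t| ^ (β - γ)) := by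
        refine continuous_const.mul (Continuous.rpow_const (by fun_prop) (fun x => Or.inr ?_))
        linarith
      have := hc.tendsto t
      simpa [Real.zero_rpow (show β - γ ≠ 0 by linarith)] using this
    exact squeeze_zero (fun _ => norm_nonneg _)
      (fun x => h2 (2 * M) _ (hcl m le_rfl) x t) hlim
  refine ⟨fracHom β₀ γ ubar, ?_, ?_, ?_, ?_⟩
  · intro x hx
    have hx0 : 0 < ‖x‖ := norm_pos_iff.2 hx
    rw [← fracHom_smul β₀ γ ubar ‖x‖ hx0, smul_smul, mul_inv_cancel₀ hx0.ne', one_smul]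
  · rw [hG, contDiff_iff_iteratedDeriv]
    constructor
    · intro i hi
      have hi' : i ≤ m := by exact_mod_cast hi
      rw [hit i hi']
      rcases hi'.eq_or_lt with rfl | hlt
      · exact hcm
      · exact continuous_iff_continuousAt.2 (fun t => (hder i hlt t).continuousAt)
    · intro i hi
      have hi' : i < m := by exact_mod_cast hi
      rw [hit i hi'.le]
      exact fun t => (hder i hi' t).differentiableAt
  · intro i hi t
    rw [hG, hit i hi]
    refine (h1 (2 * M) _ (hcl i hi) t).trans ?_
    nlinarith [mul_nonneg hC2.le hM]
  · intro t t'
    rw [hG, hit m le_rfl]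
    refine (h2 (2 * M) _ (hcl m le_rfl) t t').trans ?_
    have : 0 ≤ |t - t'| ^ (β - γ) := by positivity
    have h3 : C2 * (2 * M) ≤ (2 * C1 + 2 * C2) * M := by nlinarith [mul_nonneg hC1.le hM]
    gcongr
end
end
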